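/- Let {A^k}_{k≥0} be a greedy HOOI sequence. If Ā is a block-nondegenerate limit point of {A^k}, then Ā is a critical point and the entire sequence converges to Ā, i.e., Aₙ^k → Āₙ in Frobenius norm for every n as k → ∞. -/

import Mathlib

open Matrix BigOperators Filter

def froSq {ι κ : Type*} [Fintype ι] [Fintype κ] (M : Matrix ι κ ℝ) : ℝ :=
  ∑ i, ∑ j, (M i j) ^ 2

noncomputable def fro {ι κ : Type*} [Fintype ι] [Fintype κ] (M : Matrix ι κ ℝ) : ℝ :=
  Real.sqrt (froSq M)

noncomputable def eigList {m : ℕ} {κ : Type*} [Fintype κ] (Y : Matrix (Fin m) κ ℝ) : List ℝ :=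
  ((((Finset.univ : Finset (Fin m)).val.map
      (fun j => (Matrix.isHermitian_mul_conjTranspose_self Y).eigenvalues j)).sort (· ≤ ·)).reverse)

noncomputable def sval {m : ℕ} {κ : Type*} [Fintype κ] (Y : Matrix (Fin m) κ ℝ) (i : ℕ) : ℝ :=
  Real.sqrt ((eigList Y).getD (i - 1) 0)

/-- Feasibility: every factor matrix has orthonormal columns. -/
def TFeas {N : ℕ} {I r : Fin N → ℕ}
    (A : (n : Fin N) → Matrix (Fin (I n)) (Fin (r n)) ℝ) : Prop :=
  ∀ n, (A n)ᵀ * A n = 1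

/-- `Gₙ(A) = unfoldₙ(X ×₁ A₁ᵀ ⋯ ×_{n−1} A_{n−1}ᵀ ×_{n+1} A_{n+1}ᵀ ⋯ ×_N A_Nᵀ)`. -/
noncomputable def Gmat {N : ℕ} {I r : Fin N → ℕ} (X : ((n : Fin N) → Fin (I n)) → ℝ)
    (A : (n : Fin N) → Matrix (Fin (I n)) (Fin (r n)) ℝ) (n : Fin N) :
    Matrix (Fin (I n)) ((m : {m : Fin N // m ≠ n}) → Fin (r m.1)) ℝ :=
  fun j c => ∑ idx : ((m : {m : Fin N // m ≠ n}) → Fin (I m.1)),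
    X (fun i => if h : i = n then Fin.cast (by rw [h]) j else idx ⟨i, h⟩) *
      ∏ m : {m : Fin N // m ≠ n}, A m.1 (idx m) (c m)

/-- `f(A) = ‖X ×₁ A₁ᵀ ⋯ ×_N A_Nᵀ‖_F²`. -/
noncomputable def fval {N : ℕ} {I r : Fin N → ℕ} (X : ((n : Fin N) → Fin (I n)) → ℝ)
    (A : (n : Fin N) → Matrix (Fin (I n)) (Fin (r n)) ℝ) : ℝ :=
  ∑ c : ((n : Fin N) → Fin (r n)),
    (∑ idx : ((n : Fin N) → Fin (I n)), X idx * ∏ n, A n (idx n) (c n)) ^ 2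

/-- A critical point: `Gₙ(A)Gₙ(A)ᵀAₙ = AₙAₙᵀGₙ(A)Gₙ(A)ᵀAₙ` for all `n`. -/
def Critical {N : ℕ} {I r : Fin N → ℕ} (X : ((n : Fin N) → Fin (I n)) → ℝ)
    (A : (n : Fin N) → Matrix (Fin (I n)) (Fin (r n)) ℝ) : Prop :=
  ∀ n, Gmat X A n * (Gmat X A n)ᵀ * A n =
    A n * (A n)ᵀ * (Gmat X A n * (Gmat X A n)ᵀ * A n)

/-- A block-wise maximizer. -/
def BlockMax {N : ℕ} {I r : Fin N → ℕ} (X : ((n : Fin N) → Fin (I n)) → ℝ)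
    (A : (n : Fin N) → Matrix (Fin (I n)) (Fin (r n)) ℝ) : Prop :=
  ∀ n, ∀ B : Matrix (Fin (I n)) (Fin (r n)) ℝ, Bᵀ * B = 1 →
    froSq (Bᵀ * Gmat X A n) ≤ froSq ((A n)ᵀ * Gmat X A n)

/-- Block-nondegeneracy: `σ_{rₙ}(Gₙ(A)) > σ_{rₙ+1}(Gₙ(A))` for all `n`. -/
def NonDeg {N : ℕ} {I r : Fin N → ℕ} (X : ((n : Fin N) → Fin (I n)) → ℝ)
    (A : (n : Fin N) → Matrix (Fin (I n)) (Fin (r n)) ℝ) : Prop :=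
  ∀ n, sval (Gmat X A n) (r n + 1) < sval (Gmat X A n) (r n)

/-- The hybrid tuple used in HOOI: the already-updated blocks `i < n` come from
`Anew`, the rest from `Aold`. -/
def hyb {N : ℕ} {I r : Fin N → ℕ}
    (Aold Anew : (n : Fin N) → Matrix (Fin (I n)) (Fin (r n)) ℝ) (n : Fin N) :
    (i : Fin N) → Matrix (Fin (I i)) (Fin (r i)) ℝ :=
  fun i => if i < n then Anew i else Aold i

/-- `Gₙ^k = unfoldₙ(X ×₁ (A₁^{k+1})ᵀ ⋯ ×_{n−1} (A_{n−1}^{k+1})ᵀ ×_{n+1} (A_{n+1}^k)ᵀ ⋯ ×_N (A_N^k)ᵀ)`. -/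
noncomputable def Gseq {N : ℕ} {I r : Fin N → ℕ} (X : ((n : Fin N) → Fin (I n)) → ℝ)
    (A : ℕ → (n : Fin N) → Matrix (Fin (I n)) (Fin (r n)) ℝ) (k : ℕ) (n : Fin N) :
    Matrix (Fin (I n)) ((m : {m : Fin N // m ≠ n}) → Fin (r m.1)) ℝ :=
  Gmat X (hyb (A k) (A (k + 1)) n) n

/-- A HOOI sequence. -/
def IsHOOI {N : ℕ} {I r : Fin N → ℕ} (X : ((n : Fin N) → Fin (I n)) → ℝ)
    (A : ℕ → (n : Fin N) → Matrix (Fin (I n)) (Fin (r n)) ℝ) : Prop :=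
  (∀ k, TFeas (A k)) ∧
  ∀ k (n : Fin N), ∀ B : Matrix (Fin (I n)) (Fin (r n)) ℝ, Bᵀ * B = 1 →
    froSq (Bᵀ * Gseq X A k n) ≤ froSq ((A (k + 1) n)ᵀ * Gseq X A k n)

/-- A greedy HOOI sequence. -/
def IsGreedyHOOI {N : ℕ} {I r : Fin N → ℕ} (X : ((n : Fin N) → Fin (I n)) → ℝ)
    (A : ℕ → (n : Fin N) → Matrix (Fin (I n)) (Fin (r n)) ℝ) : Prop :=
  IsHOOI X A ∧
  ∀ k (n : Fin N), ∀ B : Matrix (Fin (I n)) (Fin (r n)) ℝ, Bᵀ * B = 1 →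
    (∀ C : Matrix (Fin (I n)) (Fin (r n)) ℝ, Cᵀ * C = 1 →
      froSq (Cᵀ * Gseq X A k n) ≤ froSq (Bᵀ * Gseq X A k n)) →
    fro (A (k + 1) n - A k n) ≤ fro (B - A k n)

/-- `Ā` is a limit point of the sequence `{A^k}` (blockwise in Frobenius norm). -/
def IsLimitPt {N : ℕ} {I r : Fin N → ℕ}
    (A : ℕ → (n : Fin N) → Matrix (Fin (I n)) (Fin (r n)) ℝ)
    (Abar : (n : Fin N) → Matrix (Fin (I n)) (Fin (r n)) ℝ) : Prop :=
  ∃ φ : ℕ → ℕ, StrictMono φ ∧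
    ∀ n, Tendsto (fun k => fro (A (φ k) n - Abar n)) atTop (nhds 0)

/-- `‖A − B‖_F = √(∑ₙ ‖Aₙ − Bₙ‖_F²)` on tuples. -/
noncomputable def tdist {N : ℕ} {I r : Fin N → ℕ}
    (A B : (n : Fin N) → Matrix (Fin (I n)) (Fin (r n)) ℝ) : ℝ :=
  Real.sqrt (∑ n, froSq (A n - B n))

/-- A local maximizer of `f` over the feasible set. -/
def LocalMax {N : ℕ} {I r : Fin N → ℕ} (X : ((n : Fin N) → Fin (I n)) → ℝ)
    (A : (n : Fin N) → Matrix (Fin (I n)) (Fin (r n)) ℝ) : Prop :=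
  TFeas A ∧ ∃ ε > (0 : ℝ), ∀ B : (n : Fin N) → Matrix (Fin (I n)) (Fin (r n)) ℝ,
    TFeas B → tdist B A ≤ ε → fval X B ≤ fval X A

/-- A globally optimal solution. -/
def GlobalMax {N : ℕ} {I r : Fin N → ℕ} (X : ((n : Fin N) → Fin (I n)) → ℝ)
    (A : (n : Fin N) → Matrix (Fin (I n)) (Fin (r n)) ℝ) : Prop :=
  TFeas A ∧ ∀ B : (n : Fin N) → Matrix (Fin (I n)) (Fin (r n)) ℝ,
    TFeas B → fval X B ≤ fval X A



section KLField
open Polynomial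

variable {K : Type*} [Field K] [Algebra ℝ K]

/-- Pairs `(z, w)` where `w` is an admissible logarithmic-type derivative of `z`. -/
def Good (N : AbsoluteValue K ℝ) (p : DualNumber K) : Prop :=
  (p.fst = 0 → p.snd = 0) ∧
  (p.fst ≠ 0 → N (p.snd - algebraMap ℝ K (Real.log (N p.fst)) * p.fst) < N p.fst)

variable {N : AbsoluteValue K ℝ}

/-- The dual number `z + w ε`. -/
def mkDual (z w : K) : DualNumber K := TrivSqZeroExt.inl z + TrivSqZeroExt.inr w

@[simp] theorem mkDual_fst (z w : K) : (mkDual z w).fst = z := by simp [mkDual]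
@[simp] theorem mkDual_snd (z w : K) : (mkDual z w).snd = w := by simp [mkDual]

structure Nice (N : AbsoluteValue K ℝ) : Prop where
  na : ∀ x y, N (x + y) ≤ max (N x) (N y)
  re : ∀ r : ℝ, r ≠ 0 → N (algebraMap ℝ K r) = 1

theorem Nice.re_le (h : Nice N) (r : ℝ) : N (algebraMap ℝ K r) ≤ 1 := by
  by_cases hr : r = 0
  · simp [hr]
  · exact (h.re r hr).le

theorem Nice.re_mul_le (h : Nice N) (r : ℝ) (x : K) : N (algebraMap ℝ K r * x) ≤ N x := by
  rw [map_mul]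
  have := h.re_le r
  nlinarith [N.nonneg x]

theorem Nice.add_lt (h : Nice N) {x y : K} {r : ℝ} (hx : N x < r) (hy : N y < r) :
    N (x + y) < r := lt_of_le_of_lt (h.na x y) (max_lt hx hy)

theorem Nice.sub_lt (h : Nice N) {x y : K} {r : ℝ} (hx : N x < r) (hy : N y < r) :
    N (x - y) < r := by
  rw [sub_eq_add_neg]; exact h.add_lt hx (by simpa using hy)

theorem Nice.add_le (h : Nice N) {x y : K} {r : ℝ} (hx : N x ≤ r) (hy : N y ≤ r) :
    N (x + y) ≤ r := (h.na x y).trans (max_le hx hy)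

theorem Nice.sub_le (h : Nice N) {x y : K} {r : ℝ} (hx : N x ≤ r) (hy : N y ≤ r) :
    N (x - y) ≤ r := by
  rw [sub_eq_add_neg]; exact h.add_le hx (by simpa using hy)

theorem Nice.sum_lt (h : Nice N) {ι : Type*} (s : Finset ι) (f : ι → K) {r : ℝ} (hr : 0 < r)
    (hf : ∀ i ∈ s, N (f i) < r) : N (∑ i ∈ s, f i) < r := by
  classical
  induction s using Finset.induction_on with
  | empty => simpa using hr
  | insert a s ha ih =>
    rw [Finset.sum_insert ha]
    exact h.add_lt (hf a (by simp)) (ih fun i hi => hf i (by simp [hi]))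

theorem Nice.sum_le (h : Nice N) {ι : Type*} (s : Finset ι) (f : ι → K) {r : ℝ} (hr : 0 ≤ r)
    (hf : ∀ i ∈ s, N (f i) ≤ r) : N (∑ i ∈ s, f i) ≤ r := by
  classical
  induction s using Finset.induction_on with
  | empty => simpa using hr
  | insert a s ha ih =>
    rw [Finset.sum_insert ha]
    exact h.add_le (hf a (by simp)) (ih fun i hi => hf i (by simp [hi]))

theorem Nice.add_eq (h : Nice N) {x y : K} (hxy : N x < N y) : N (x + y) = N y := by
  apply le_antisymm (h.add_le hxy.le le_rfl)
  by_contra hc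
  push Not at hc
  have := h.sub_lt hc hxy
  simp at this

theorem Good.snd_le (h : Nice N) {p : DualNumber K} (hp : Good N p) : N p.snd ≤ N p.fst := by
  by_cases h0 : p.fst = 0
  · rw [hp.1 h0, h0]
  · have := h.add_le (hp.2 h0).le (h.re_mul_le (Real.log (N p.fst)) p.fst)
    simpa using this

theorem Good.zero : Good N 0 := ⟨fun _ => by simp, fun h => absurd (by simp) h⟩

theorem Good.real (h : Nice N) (r : ℝ) : Good N (algebraMap ℝ (DualNumber K) r) := by
  have e1 : (algebraMap ℝ (DualNumber K) r).fst = algebraMap ℝ K r := by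
    simp [TrivSqZeroExt.algebraMap_eq_inl']
  have e2 : (algebraMap ℝ (DualNumber K) r).snd = 0 := by
    simp [TrivSqZeroExt.algebraMap_eq_inl']
  refine ⟨fun _ => e2, fun h0 => ?_⟩
  rw [e1] at h0 ⊢
  have : r ≠ 0 := by rintro rfl; simp at h0
  rw [e2, h.re r this]; simp

theorem Good.mul (h : Nice N) {p q : DualNumber K} (hp : Good N p) (hq : Good N q) :
    Good N (p * q) := by
  refine ⟨fun h0 => ?_, fun h0 => ?_⟩
  · simp only [TrivSqZeroExt.fst_mul, mul_eq_zero] at h0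
    rcases h0 with h0 | h0
    · simp [h0, hp.1 h0]
    · simp [h0, hq.1 h0]
  · simp only [TrivSqZeroExt.fst_mul, mul_ne_zero_iff] at h0
    obtain ⟨h1, h2⟩ := h0
    have g1 := hp.2 h1
    have g2 := hq.2 h2
    have n1 := N.pos h1
    have n2 := N.pos h2
    have e : (p * q).snd - algebraMap ℝ K (Real.log (N (p * q).fst)) * (p * q).fst =
        p.fst * (q.snd - algebraMap ℝ K (Real.log (N q.fst)) * q.fst) +
        q.fst * (p.snd - algebraMap ℝ K (Real.log (N p.fst)) * p.fst) := by
      simp only [TrivSqZeroExt.snd_mul, TrivSqZeroExt.fst_mul, map_mul]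
      rw [Real.log_mul n1.ne' n2.ne', map_add]
      simp only [smul_eq_mul, MulOpposite.smul_eq_mul_unop, MulOpposite.unop_op]
      ring
    rw [e]
    simp only [TrivSqZeroExt.fst_mul]
    apply h.add_lt
    · rw [map_mul, map_mul]; exact mul_lt_mul_of_pos_left g2 n1
    · rw [map_mul, map_mul, mul_comm]; exact mul_lt_mul_of_pos_right g1 n2

theorem Good.inv (h : Nice N) {p q : DualNumber K} (hp : Good N p) (hpq : p * q = 1) :
    Good N q := by
  have f1 : p.fst * q.fst = 1 := by
    have := congrArg TrivSqZeroExt.fst hpq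
    simpa using this
  have f2 : p.fst * q.snd + q.fst * p.snd = 0 := by
    have := congrArg TrivSqZeroExt.snd hpq
    simpa [mul_comm] using this
  have h1 : p.fst ≠ 0 := left_ne_zero_of_mul_eq_one f1
  have h2 : q.fst ≠ 0 := right_ne_zero_of_mul_eq_one f1
  refine ⟨fun h0 => absurd h0 h2, fun _ => ?_⟩
  have n1 := N.pos h1
  have n2 := N.pos h2
  have f3 : N p.fst * N q.fst = 1 := by rw [← map_mul, f1, map_one]
  have g1 := hp.2 h1
  have e : q.snd - algebraMap ℝ K (Real.log (N q.fst)) * q.fst =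
     -(q.fst * q.fst * (p.snd - algebraMap ℝ K (Real.log (N p.fst)) * p.fst)) := by
    have : Real.log (N q.fst) = - Real.log (N p.fst) := by
      rw [← Real.log_inv]; congr 1; field_simp; linarith
    rw [this, map_neg]
    have e3 : q.snd = - (q.fst * q.fst * p.snd) := by
      linear_combination q.fst * f2 - q.snd * f1
    rw [e3]
    linear_combination (-(algebraMap ℝ K (Real.log (N p.fst))) * q.fst) * f1
  rw [e, map_neg_eq_map, map_mul, map_mul]
  calc _ < N q.fst * N q.fst * N p.fst := mul_lt_mul_of_pos_left g1 (by positivity)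
    _ = _ := by rw [mul_assoc, mul_comm (N q.fst) (N p.fst), f3, mul_one]

theorem Good.one (h : Nice N) : Good N 1 := by simpa using Good.real h 1

theorem Good.pow (h : Nice N) {p : DualNumber K} (hp : Good N p) (n : ℕ) : Good N (p ^ n) := by
  induction n with
  | zero => simpa using Good.one h
  | succ n ih => rw [pow_succ]; exact ih.mul h hp

theorem Good.add_of_lt (h : Nice N) {p q : DualNumber K} (hp : Good N p) (hq : Good N q)
    (hlt : N p.fst < N q.fst) : Good N (p + q) := by
  have hq0 : q.fst ≠ 0 := by
    intro h0; rw [h0, map_zero] at hlt; exact absurd hlt (not_lt.2 (N.nonneg _))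
  have e : N (p + q).fst = N q.fst := by
    rw [TrivSqZeroExt.fst_add]; exact h.add_eq hlt
  have hpos := N.pos hq0
  refine ⟨fun h0 => ?_, fun _ => ?_⟩
  · rw [h0, map_zero] at e; linarith
  · rw [e]
    have : (p + q).snd - algebraMap ℝ K (Real.log (N q.fst)) * (p + q).fst =
      (p.snd - algebraMap ℝ K (Real.log (N q.fst)) * p.fst) +
      (q.snd - algebraMap ℝ K (Real.log (N q.fst)) * q.fst) := by
      simp only [TrivSqZeroExt.snd_add, TrivSqZeroExt.fst_add]; ring
    rw [this]
    apply h.add_lt _ (hq.2 hq0)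
    exact h.sub_lt ((hp.snd_le h).trans_lt hlt) ((h.re_mul_le _ _).trans_lt hlt)

variable {G : Type*} [Field G] (φ : G →+* DualNumber K)

theorem good_split (h : Nice N) (hφ : ∀ g, Good N (φ g)) (p : DualNumber K) (P : G[X])
    (hP : P.Splits) (hp : ∀ a, Good N (p - φ a)) : Good N (P.eval₂ φ p) := by
  rw [hP.eq_prod_roots, eval₂_mul, eval₂_C]
  apply (hφ _).mul h
  generalize P.roots = s
  induction s using Multiset.induction_on with
  | empty => simpa using Good.one h
  | cons a s ih =>
    rw [Multiset.map_cons, Multiset.prod_cons, eval₂_mul]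
    refine Good.mul h ?_ ih
    simpa using hp a

theorem gauss_bound (h : Nice N) (y : K) (s : Multiset G)
    (hs : ∀ β ∈ s, N y ≤ N (y - (φ β).fst)) (i : ℕ) :
    N (φ (((s.map fun β => X - C β).prod).coeff i)).fst * N y ^ i ≤
      (s.map fun β => N (y - (φ β).fst)).prod := by
  induction s using Multiset.induction_on generalizing i with
  | empty =>
    rcases i with _ | i
    · simp
    · simp [coeff_one]
  | cons β s ih =>
    have ih' := ih (fun b hb => hs b (by simp [hb]))
    have hβ := hs β (by simp)
    have hβ2 : N (φ β).fst ≤ N (y - (φ β).fst) := by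
      have := h.sub_le hβ (le_refl (N (y - (φ β).fst)))
      simpa using this
    rw [Multiset.map_cons, Multiset.prod_cons, Multiset.map_cons, Multiset.prod_cons]
    set R := (s.map fun β => X - C β).prod
    set B := (s.map fun β => N (y - (φ β).fst)).prod
    have hB : 0 ≤ B := Multiset.prod_nonneg (by
      intro a ha; rw [Multiset.mem_map] at ha; obtain ⟨b, _, rfl⟩ := ha; exact N.nonneg _)
    have t : ∀ j, N ((φ β).fst * (φ (R.coeff j)).fst) * N y ^ j ≤ N (y - (φ β).fst) * B := by
      intro j
      rw [map_mul, mul_assoc]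
      exact mul_le_mul hβ2 (ih' j) (by positivity) (N.nonneg _)
    rcases i with _ | i
    · simpa [sub_mul] using t 0
    · have e : (φ (((X - C β) * R).coeff (i + 1))).fst =
        (φ (R.coeff i)).fst - (φ β).fst * (φ (R.coeff (i+1))).fst := by
        simp [sub_mul]
      rw [e]
      rcases le_total (N (φ (R.coeff i)).fst) (N ((φ β).fst * (φ (R.coeff (i+1))).fst)) with hc | hc
      · refine le_trans (mul_le_mul_of_nonneg_right (h.sub_le hc le_rfl) (by positivity)) (t _)
      · refine le_trans (mul_le_mul_of_nonneg_right (h.sub_le le_rfl hc) (by positivity)) ?_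
        rw [pow_succ, ← mul_assoc, mul_comm]
        exact mul_le_mul hβ (ih' i) (by positivity) (N.nonneg _)

theorem alg_core (h : Nice N) (hφ : ∀ g, Good N (φ g)) (p : DualNumber K) (q : G[X])
    (hq : q.eval₂ φ p = 0) (hy : p.fst ≠ 0) (lc : G) (hlc : lc ≠ 0) (s : Multiset G)
    (hd : derivative q = C lc * (s.map fun β => X - C β).prod)
    (hs : ∀ β ∈ s, N p.fst ≤ N (p.fst - (φ β).fst)) : Good N p := by
  refine ⟨fun h0 => absurd h0 hy, fun _ => ?_⟩
  set y := p.fst with hydef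
  set w := p.snd with hwdef
  set r := N y with hr
  have hrpos : 0 < r := N.pos hy
  set n := q.natDegree
  set c : ℕ → K := fun i => (φ (q.coeff i)).fst with hc
  set d : ℕ → K := fun i => (φ (q.coeff i)).snd with hdd
  set L := Real.log r with hL
  have hsum : ∑ i ∈ Finset.range (n + 1), φ (q.coeff i) * p ^ i = 0 := by
    rw [← eval₂_eq_sum_range]; exact hq
  have hfst : ∑ i ∈ Finset.range (n + 1), c i * y ^ i = 0 := by
    have := congrArg (TrivSqZeroExt.fstHom ℝ K K) hsum
    simpa [map_sum] using this
  have hsnd : ∑ i ∈ Finset.range (n + 1), (c i * (i * y ^ (i - 1) * w) + y ^ i * d i) = 0 := by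
    have := congrArg (TrivSqZeroExt.sndHom K K) hsum
    rw [map_sum] at this
    simp only [TrivSqZeroExt.sndHom_apply, TrivSqZeroExt.snd_mul, TrivSqZeroExt.snd_pow,
      TrivSqZeroExt.fst_pow, TrivSqZeroExt.snd_zero] at this
    rw [← this]
    apply Finset.sum_congr rfl
    intro i _
    simp only [smul_eq_mul, nsmul_eq_mul, MulOpposite.smul_eq_mul_unop, MulOpposite.unop_op,
      Nat.pred_eq_sub_one, hc, hdd]
    ring
  -- value of the derivative
  set E := ∑ i ∈ Finset.range (n + 1), c i * (i * y ^ (i - 1)) with hE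
  have hE' : E = (φ lc).fst * (s.map fun β => y - (φ β).fst).prod := by
    let ψ : G →+* K := (TrivSqZeroExt.fstHom K K K).toRingHom.comp φ
    have h1 : (derivative q).eval₂ ψ y = E := by
      rw [derivative_apply, sum_over_range _ (by simp), eval₂_finset_sum, hE]
      apply Finset.sum_congr rfl
      intro i _
      simp [ψ, hc, mul_assoc]
    rw [← h1, hd, eval₂_mul, eval₂_C]
    congr 1
    rw [← coe_eval₂RingHom, map_multiset_prod, Multiset.map_map]
    congr 1
    apply Multiset.map_congr rfl
    intro β _
    simp [ψ]
  have hlc' : (φ lc).fst ≠ 0 := by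
    intro h0
    apply hlc
    have : φ lc = 0 := TrivSqZeroExt.ext h0 ((hφ lc).1 h0)
    exact (map_eq_zero φ).1 this
  set B := (s.map fun β => N (y - (φ β).fst)).prod with hB
  have hNE : N E = N (φ lc).fst * B := by
    rw [hE', map_mul, map_multiset_prod, Multiset.map_map]; rfl
  have hBpos : 0 < B := Multiset.prod_pos (by
      intro a ha; rw [Multiset.mem_map] at ha; obtain ⟨b, hb, rfl⟩ := ha
      exact lt_of_lt_of_le hrpos (hs b hb))
  have hEpos : 0 < N E := by rw [hNE]; exact mul_pos (N.pos hlc') hBpos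
  set lam := N E * r with hlam
  have hlampos : 0 < lam := mul_pos hEpos hrpos
  -- coefficient bounds
  have hci : ∀ i, N (c (i+1)) * r ^ (i+1) ≤ lam := by
    intro i
    have h1 : (φ ((derivative q).coeff i)).fst = c (i+1) * ((i:K) + 1) := by
      rw [coeff_derivative]; simp [hc]
    have h2 : N ((i:K) + 1) = 1 := by
      have := h.re ((i:ℝ)+1) (by positivity)
      simpa using this
    have h3 := gauss_bound φ h y s hs i
    have h4 : (φ ((derivative q).coeff i)).fst =
      (φ lc).fst * (φ (((s.map fun β => X - C β).prod).coeff i)).fst := by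
      rw [hd, coeff_C_mul]; simp
    have h5 : N (c (i+1)) = N (φ lc).fst * N (φ (((s.map fun β => X - C β).prod).coeff i)).fst := by
      rw [← map_mul, ← h4, h1, map_mul, h2, mul_one]
    rw [h5, hlam, hNE, pow_succ]
    calc _ = N (φ lc).fst * (N (φ (((s.map fun β => X - C β).prod).coeff i)).fst * N y ^ i) * r := by
            ring
      _ ≤ _ := by gcongr
  have hcall : ∀ i, N (c i) * r ^ i ≤ lam := by
    intro i
    rcases i with _ | i
    · rw [Finset.sum_range_succ'] at hfst
      have h1 : c 0 = - ∑ k ∈ Finset.range n, c (k + 1) * y ^ (k + 1) := by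
        simp only [pow_zero, mul_one] at hfst
        linear_combination hfst
      rw [h1, map_neg_eq_map, pow_zero, mul_one]
      apply h.sum_le _ _ hlampos.le
      intro i _
      rw [map_mul, map_pow]; exact hci i
    · exact hci i
  have key : E * (w - algebraMap ℝ K L * y) = - ∑ i ∈ Finset.range (n + 1),
      (d i + algebraMap ℝ K (i * L - Real.log lam) * c i) * y ^ i := by
    have h1 : ∑ i ∈ Finset.range (n + 1),
      (d i + algebraMap ℝ K (i * L - Real.log lam) * c i) * y ^ i =
      (∑ i ∈ Finset.range (n + 1), y ^ i * d i) +
      algebraMap ℝ K L * y * E - algebraMap ℝ K (Real.log lam) *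
        (∑ i ∈ Finset.range (n + 1), c i * y ^ i) := by
      rw [hE, Finset.mul_sum, Finset.mul_sum, ← Finset.sum_add_distrib, ← Finset.sum_sub_distrib]
      apply Finset.sum_congr rfl
      intro i _
      rcases i with _ | i
      · simp; ring
      · simp; ring
    rw [h1, hfst]
    rw [Finset.sum_add_distrib] at hsnd
    have h2 : ∑ i ∈ Finset.range (n + 1), c i * (i * y ^ (i - 1) * w) = E * w := by
      rw [hE, Finset.sum_mul]; apply Finset.sum_congr rfl; intros; ring
    rw [h2] at hsnd
    linear_combination hsnd
  have hlt : N (E * (w - algebraMap ℝ K L * y)) < lam := by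
    rw [key, map_neg_eq_map]
    apply h.sum_lt _ _ hlampos
    intro i _
    have gi := hφ (q.coeff i)
    by_cases hci0 : c i = 0
    · have : d i = 0 := gi.1 hci0
      simpa [hci0, this] using hlampos
    · have g2 := gi.2 hci0
      have hcp : 0 < N (c i) := N.pos hci0
      have e : (d i + algebraMap ℝ K (i * L - Real.log lam) * c i) * y ^ i =
        (d i - algebraMap ℝ K (Real.log (N (c i))) * c i) * y ^ i +
        algebraMap ℝ K (Real.log (N (c i)) + i * L - Real.log lam) * (c i * y ^ i) := by
        simp only [map_add, map_sub]; ring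
      rw [e]
      apply h.add_lt
      · rw [map_mul, map_pow]
        refine lt_of_lt_of_le ?_ (hcall i)
        exact mul_lt_mul_of_pos_right g2 (by positivity)
      · rcases (hcall i).lt_or_eq with hl | hl
        · refine (h.re_mul_le _ _).trans_lt ?_
          rw [map_mul, map_pow]; exact hl
        · have : Real.log (N (c i)) + i * L - Real.log lam = 0 := by
            rw [← hl, Real.log_mul hcp.ne' (by positivity), Real.log_pow]; ring
          rw [this]; simpa using hlampos
  rw [map_mul, hlam] at hlt
  exact lt_of_mul_lt_mul_left hlt hEpos.le


theorem alg_step (h : Nice N) [IsAlgClosed K] [CharZero G] (hφ : ∀ g, Good N (φ g)) (Q : G[X])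
    (hm : Q.Monic) (hQ : Irreducible Q) (hno : ∀ x, Q.eval x ≠ 0)
    (hsp : ∀ P : G[X], P.natDegree < Q.natDegree → P.Splits) :
    ∃ p : DualNumber K, Q.eval₂ φ p = 0 ∧ ∀ P : G[X], Good N (P.eval₂ φ p) := by
  let ψ : G →+* K := (TrivSqZeroExt.fstHom K K K).toRingHom.comp φ
  have hψ : ∀ g, ψ g = (φ g).fst := fun g => rfl
  have hnd : 0 < Q.natDegree := hQ.natDegree_pos
  obtain ⟨z, hz⟩ : ∃ z, Q.eval₂ ψ z = 0 := by
    apply IsAlgClosed.exists_eval₂_eq_zero_of_injective ψ ψ.injective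
    exact (natDegree_pos_iff_degree_pos.1 hnd).ne'
  have hza : ∀ a, z ≠ ψ a := by
    intro a ha
    rw [ha, eval₂_at_apply] at hz
    exact hno a ((map_eq_zero ψ).1 hz)
  set Q' := derivative Q with hQ'
  have hQ's : Q'.Splits := hsp _ (natDegree_derivative_lt hnd.ne')
  have hQ'0 : Q' ≠ 0 := by
    intro h0
    have := natDegree_eq_zero_of_derivative_eq_zero h0
    omega
  set s := Q'.roots with hs
  set lc := Q'.leadingCoeff
  have hlc : lc ≠ 0 := leadingCoeff_ne_zero.2 hQ'0
  have hQ'e : Q' = C lc * (s.map fun β => X - C β).prod := hQ's.eq_prod_roots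
  have hQ'z : Q'.eval₂ ψ z ≠ 0 := by
    rw [hQ'e, eval₂_mul, eval₂_C, ← coe_eval₂RingHom, map_multiset_prod, Multiset.map_map]
    refine mul_ne_zero ((map_ne_zero ψ).2 hlc) ?_
    rw [Ne, Multiset.prod_eq_zero_iff, Multiset.mem_map]
    rintro ⟨b, _, hb⟩
    simp only [Function.comp, coe_eval₂RingHom, eval₂_sub, eval₂_X, eval₂_C, sub_eq_zero] at hb
    exact hza b hb
  -- evaluation at a dual number
  have hev : ∀ (P : G[X]) (z w : K), (P.eval₂ φ (mkDual z w)).fst = P.eval₂ ψ z ∧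
      (P.eval₂ φ (mkDual z w)).snd =
      (P.eval₂ φ (mkDual z 0)).snd + (derivative P).eval₂ ψ z * w := by
    intro P z w
    induction P using Polynomial.induction_on' with
    | add p q hp hq =>
      constructor
      · simp only [eval₂_add, TrivSqZeroExt.fst_add, hp.1, hq.1]
      · simp only [eval₂_add, TrivSqZeroExt.snd_add, hp.2, hq.2, derivative_add]; ring
    | monomial n a =>
      constructor
      · simp only [eval₂_monomial, TrivSqZeroExt.fst_mul, TrivSqZeroExt.fst_pow, hψ, mkDual_fst]
      · simp only [eval₂_monomial, TrivSqZeroExt.snd_mul, TrivSqZeroExt.snd_pow,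
          TrivSqZeroExt.fst_pow, derivative_monomial, hψ, mkDual_fst, mkDual_snd]
        simp only [smul_eq_mul, nsmul_eq_mul, MulOpposite.smul_eq_mul_unop, MulOpposite.unop_op,
          Nat.pred_eq_sub_one, map_mul, map_natCast, TrivSqZeroExt.fst_mul,
          TrivSqZeroExt.fst_natCast]
        ring
  set w : K := - (Q.eval₂ φ (mkDual z 0)).snd / Q'.eval₂ ψ z with hw
  set p : DualNumber K := mkDual z w with hp
  have hpf : p.fst = z := by simp [hp]
  have hQp : Q.eval₂ φ p = 0 := by
    apply TrivSqZeroExt.ext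
    · rw [(hev Q z w).1, hz]; rfl
    · rw [(hev Q z w).2, hw, ← hQ']; field_simp; simp
  have hgood1 : ∀ a, (∀ β ∈ s, N (z - ψ a) ≤ N (z - ψ β)) → Good N (p - φ a) := by
    intro a ha
    refine alg_core φ h hφ (p - φ a) (Q.comp (X + C a)) ?_ ?_ lc hlc (s.map fun β => β - a) ?_ ?_
    · rw [eval₂_comp]; simp [hQp]
    · rw [TrivSqZeroExt.fst_sub, hpf, sub_ne_zero]; exact hza a
    · rw [derivative_comp, ← hQ', hQ'e]
      simp only [derivative_add, derivative_X, derivative_C, add_zero, one_mul, mul_comp, C_comp]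
      congr 1
      rw [multiset_prod_comp, Multiset.map_map, Multiset.map_map]
      congr 1
      apply Multiset.map_congr rfl
      intro β _
      simp
      ring
    · intro β hβ
      rw [Multiset.mem_map] at hβ
      obtain ⟨b, hb, rfl⟩ := hβ
      have := ha b hb
      simpa [hψ, hpf] using this
  have hgood : ∀ a, Good N (p - φ a) := by
    intro a
    by_cases hmax : ∀ β ∈ s, N (z - ψ a) ≤ N (z - ψ β)
    · exact hgood1 a hmax
    · push Not at hmax
      obtain ⟨β0, hβ0, hlt⟩ := hmax
      classical
      obtain ⟨b, hb, hbmin⟩ := Finset.exists_min_image s.toFinset (fun β => N (z - ψ β))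
        ⟨β0, by simpa using hβ0⟩
      have g1 := hgood1 b (fun β hβ => hbmin β (by simpa using hβ))
      have hlt' : N (z - ψ b) < N (z - ψ a) := lt_of_le_of_lt (hbmin β0 (by simpa using hβ0)) hlt
      have e : p - φ a = (p - φ b) + φ (b - a) := by rw [map_sub]; ring
      rw [e]
      apply g1.add_of_lt h (hφ _)
      have e2 : N (φ (b - a)).fst = N (z - ψ a) := by
        have : (φ (b - a)).fst = -(z - ψ b) + (z - ψ a) := by
          rw [map_sub, TrivSqZeroExt.fst_sub, hψ, hψ]; ring
        rw [this]
        apply h.add_eq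
        rw [map_neg_eq_map]; exact hlt'
      rw [e2, TrivSqZeroExt.fst_sub, hpf]; exact hlt'
  refine ⟨p, hQp, fun P => ?_⟩
  rw [← modByMonic_add_div P Q, eval₂_add, eval₂_mul, hQp, zero_mul, add_zero]
  refine good_split φ h hφ p _ (hsp _ ?_) hgood
  apply natDegree_modByMonic_lt _ hm
  intro h1
  simp [h1] at hnd

theorem transc_step (h : Nice N) [IsAlgClosed G] (hφ : ∀ g, Good N (φ g))
    (hsc : ∀ (c : ℕ → K) (r : ℕ → ℝ), (∀ i l, i < l → N (c l - c i) < r i) →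
      ∃ w, ∀ i, N (w - c i) ≤ r i) (z : K) (hz : ∀ g, z ≠ (φ g).fst) :
    ∃ p : DualNumber K, p.fst = z ∧ ∀ P : G[X], Good N (P.eval₂ φ p) := by
  set r : G → ℝ := fun a => N (z - (φ a).fst) with hr
  have hrpos : ∀ a, 0 < r a := fun a => N.pos (sub_ne_zero.2 (hz a))
  set c : G → K := fun a => (φ a).snd + algebraMap ℝ K (Real.log (r a)) * (z - (φ a).fst) with hc
  have pair : ∀ a b, r b ≤ r a → N (c b - c a) < r a := by
    intro a b hab
    have gd := hφ (b - a)
    have e1 : (φ (b - a)).fst = (φ b).fst - (φ a).fst := by simp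
    have e2 : (φ (b - a)).snd = (φ b).snd - (φ a).snd := by simp
    rcases hab.lt_or_eq with hlt | heq
    · have e3 : N (φ (b - a)).fst = r a := by
        have : (φ (b - a)).fst = -(z - (φ b).fst) + (z - (φ a).fst) := by rw [e1]; ring
        rw [this]; apply h.add_eq; rw [map_neg_eq_map]; exact hlt
      have h0 : (φ (b-a)).fst ≠ 0 := by
        intro h0; rw [h0, map_zero] at e3; exact (hrpos a).ne e3
      have g2 := gd.2 h0
      rw [e3] at g2
      have : c b - c a = ((φ (b-a)).snd - algebraMap ℝ K (Real.log (r a)) * (φ (b-a)).fst) +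
        algebraMap ℝ K (Real.log (r b) - Real.log (r a)) * (z - (φ b).fst) := by
        rw [e1, e2, map_sub]; simp only [hc]; ring
      rw [this]
      exact h.add_lt g2 ((h.re_mul_le _ _).trans_lt hlt)
    · have : c b - c a = ((φ (b-a)).snd - algebraMap ℝ K (Real.log (r a)) * (φ (b-a)).fst) := by
        rw [e1, e2]; simp only [hc]; rw [heq]; ring
      rw [this]
      have hle : N (φ (b-a)).fst ≤ r a := by
        have : (φ (b - a)).fst = (z - (φ a).fst) - (z - (φ b).fst) := by rw [e1]; ring
        rw [this]; exact h.sub_le le_rfl heq.le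
      rcases hle.lt_or_eq with hl | hl
      · exact h.sub_lt ((gd.snd_le h).trans_lt hl) ((h.re_mul_le _ _).trans_lt hl)
      · have h0 : (φ (b-a)).fst ≠ 0 := by
          intro h0; rw [h0, map_zero] at hl; exact (hrpos a).ne hl
        have g2 := gd.2 h0
        rwa [hl] at g2
  obtain ⟨w, hw⟩ : ∃ w, ∀ a, N (w - c a) < r a := by
    by_cases hatt : ∃ a0, ∀ a, r a0 ≤ r a
    · obtain ⟨a0, ha0⟩ := hatt
      exact ⟨c a0, fun a => pair a a0 (ha0 a)⟩
    · push Not at hatt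
      set ρ := sInf (Set.range r) with hρ
      have hbdd : BddBelow (Set.range r) := ⟨0, by rintro _ ⟨a, rfl⟩; exact (hrpos a).le⟩
      have hρlt : ∀ a, ρ < r a := by
        intro a
        obtain ⟨b, hb⟩ := hatt a
        exact (csInf_le hbdd ⟨b, rfl⟩).trans_lt hb
      have hnext : ∀ (t : ℝ), ρ < t → ∃ a, r a < t := by
        intro t ht
        obtain ⟨_, ⟨a, rfl⟩, ha⟩ := exists_lt_of_csInf_lt (Set.range_nonempty r) ht
        exact ⟨a, ha⟩
      have hstep : ∀ (n : ℕ) (a : G), ∃ b, r b < r a ∧ r b < ρ + 1 / ((n:ℝ) + 1) := by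
        intro n a
        obtain ⟨b, hb⟩ := hnext (min (r a) (ρ + 1 / ((n:ℝ)+1))) (lt_min (hρlt a) (by
          have : (0:ℝ) < 1 / ((n:ℝ)+1) := by positivity
          linarith))
        exact ⟨b, lt_of_lt_of_le hb (min_le_left _ _), lt_of_lt_of_le hb (min_le_right _ _)⟩
      choose nx hnx1 hnx2 using hstep
      let u : ℕ → G := fun n => Nat.rec 0 (fun k a => nx k a) n
      have hu : ∀ n, u (n+1) = nx n (u n) := fun n => rfl
      have hanti : StrictAnti fun n => r (u n) := strictAnti_nat_of_succ_lt (by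
        intro n; show r (u (n+1)) < r (u n); rw [hu]; exact hnx1 n (u n))
      obtain ⟨w, hw⟩ := hsc (fun n => c (u n)) (fun n => r (u n)) (by
        intro i l hil
        exact pair _ _ (hanti hil).le)
      refine ⟨w, fun a => ?_⟩
      obtain ⟨n, hn⟩ := exists_nat_one_div_lt (sub_pos.2 (hρlt a))
      have h1 : r (u (n+1)) < r a := by
        have := hnx2 n (u n)
        rw [hu]; linarith
      have := h.add_lt ((hw (n+1)).trans_lt h1) (pair a (u (n+1)) h1.le)
      simpa using this
  refine ⟨mkDual z w, mkDual_fst z w, fun P => ?_⟩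
  apply good_split φ h hφ _ P (IsAlgClosed.splits P)
  intro a
  have f1 : ((mkDual z w) - φ a).fst = z - (φ a).fst := by simp
  have f2 : ((mkDual z w) - φ a).snd = w - (φ a).snd := by simp
  refine ⟨fun h0 => ?_, fun _ => ?_⟩
  · rw [f1, sub_eq_zero] at h0; exact absurd h0 (hz a)
  · rw [f1, f2]
    have := hw a
    simp only [hc] at this
    rwa [← sub_sub] at this

end KLField



section KLZorn
open Polynomial
universe u
variable {K : Type u} [Field K] [Algebra ℝ K] {N : AbsoluteValue K ℝ}

theorem zornA (h : Nice N) : ∃ G : Subring (DualNumber K),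
    (algebraMap ℝ (DualNumber K)).range ≤ G ∧
    Maximal (fun G : Subring (DualNumber K) => ∀ x ∈ G, Good N x) G := by
  have := zorn_le_nonempty₀ {G : Subring (DualNumber K) | ∀ x ∈ G, Good N x} ?_
    (algebraMap ℝ (DualNumber K)).range ?_
  · obtain ⟨m, h1, h2⟩ := this
    exact ⟨m, h1, h2⟩
  · intro c hc hch y hy
    refine ⟨sSup c, ?_, fun z hz => le_sSup hz⟩
    intro x hx
    rw [Subring.mem_sSup_of_directedOn ⟨y, hy⟩ hch.directedOn] at hx
    obtain ⟨s, hs, hxs⟩ := hx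
    exact hc hs x hxs
  · rintro _ ⟨r, rfl⟩
    exact Good.real h r

theorem zornB (h : Nice N) : ∃ (F : Type u) (_ : Field F) (φ : F →+* DualNumber K),
    (∀ g, Good N (φ g)) ∧ (∀ r : ℝ, ∃ g, φ g = algebraMap ℝ (DualNumber K) r) ∧
    ∀ p : DualNumber K, (∀ P : F[X], Good N (P.eval₂ φ p)) → ∃ g, φ g = p := by
  obtain ⟨G, hre, hmax⟩ := zornA h
  have key : ∀ (F : Type u) [CommRing F] (φ : F →+* DualNumber K), φ.range = G →
      ∀ p : DualNumber K, (∀ P : F[X], Good N (P.eval₂ φ p)) → ∃ g, φ g = p := by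
    intro F _ φ hφ p hp
    have hG' : (eval₂RingHom φ p).range ≤ G := by
      apply hmax.2
      · rintro _ ⟨P, rfl⟩
        exact hp P
      · rw [← hφ]
        rintro _ ⟨x, rfl⟩
        exact ⟨C x, by simp⟩
    have : p ∈ G := hG' ⟨X, by simp⟩
    rw [← hφ] at this
    exact this
  have hfst : ∀ g ∈ G, g ≠ 0 → g.fst ≠ 0 := by
    intro g hg h0 h1
    exact h0 (TrivSqZeroExt.ext h1 ((hmax.1 g hg).1 h1))
  have hF : IsField G := by
    refine ⟨⟨0, 1, zero_ne_one⟩, mul_comm, ?_⟩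
    rintro ⟨g, hg⟩ hg0
    have hg0' : g ≠ 0 := fun h => hg0 (Subtype.ext h)
    have hy := hfst g hg hg0'
    set q : DualNumber K := mkDual (g.fst)⁻¹ (-g.snd / g.fst ^ 2) with hq
    have hgq : g * q = 1 := by
      apply TrivSqZeroExt.ext
      · simp [hq, hy]
      · simp [hq]; field_simp; ring
    have hqG : Good N q := (hmax.1 g hg).inv h hgq
    have hpow : ∀ P : G[X], ∃ n : ℕ, g ^ n * P.eval₂ G.subtype q ∈ G := by
      intro P
      induction P using Polynomial.induction_on' with
      | add a b ha hb =>
        obtain ⟨n, hn⟩ := ha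
        obtain ⟨m, hm⟩ := hb
        refine ⟨n + m, ?_⟩
        have : g ^ (n + m) * (a + b).eval₂ G.subtype q =
          g ^ m * (g ^ n * a.eval₂ G.subtype q) + g ^ n * (g ^ m * b.eval₂ G.subtype q) := by
          rw [eval₂_add]; ring
        rw [this]
        exact G.add_mem (G.mul_mem (G.pow_mem hg m) hn) (G.mul_mem (G.pow_mem hg n) hm)
      | monomial n a =>
        refine ⟨n, ?_⟩
        rw [eval₂_monomial]
        have : g ^ n * (G.subtype a * q ^ n) = G.subtype a := by
          rw [mul_left_comm, ← mul_pow, hgq, one_pow, mul_one]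
        rw [this]; exact a.2
    obtain ⟨g', hg'⟩ := key G G.subtype (Subring.range_subtype G) q (by
      intro P
      obtain ⟨n, hn⟩ := hpow P
      have : P.eval₂ G.subtype q = q ^ n * (g ^ n * P.eval₂ G.subtype q) := by
        rw [← mul_assoc, ← mul_pow, mul_comm q, hgq, one_pow, one_mul]
      rw [this]
      exact (hqG.pow h n).mul h (hmax.1 _ hn))
    refine ⟨g', Subtype.ext ?_⟩
    change g * G.subtype g' = 1
    rw [hg', hgq]
  let _ : Field G := hF.toField
  refine ⟨G, hF.toField, G.subtype, fun g => hmax.1 _ g.2, fun r => ⟨⟨_, hre ⟨r, rfl⟩⟩, rfl⟩, ?_⟩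
  exact key G G.subtype (Subring.range_subtype G)

theorem exists_derivation (h : Nice N) [IsAlgClosed K]
    (hsc : ∀ (c : ℕ → K) (r : ℕ → ℝ), (∀ i l, i < l → N (c l - c i) < r i) →
      ∃ w, ∀ i, N (w - c i) ≤ r i) :
    ∃ D : Derivation ℝ K K, ∀ z, z ≠ 0 →
      N (D z - algebraMap ℝ K (Real.log (N z)) * z) < N z := by
  obtain ⟨F, _, φ, hφ, hre, key⟩ := zornB h
  have hinj : Function.Injective φ := φ.injective
  have : CharZero F := by
    constructor
    intro m n hmn
    have h1 : φ m = φ n := by rw [hmn]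
    rw [map_natCast, map_natCast] at h1
    have h2 := congrArg TrivSqZeroExt.fst h1
    rw [TrivSqZeroExt.fst_natCast, TrivSqZeroExt.fst_natCast] at h2
    have h3 : algebraMap ℝ K m = algebraMap ℝ K n := by simpa using h2
    exact_mod_cast (algebraMap ℝ K).injective h3
  have hac : IsAlgClosed F := by
    by_contra hcon
    have hex : ∃ n : ℕ, ∃ Q : F[X], Q.natDegree = n ∧ Q.Monic ∧ Irreducible Q ∧
        ∀ x, Q.eval x ≠ 0 := by
      by_contra hne
      push Not at hne
      apply hcon
      apply IsAlgClosed.of_exists_root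
      intro p hp hi
      exact hne p.natDegree p rfl hp hi
    classical
    obtain ⟨Q, hQn, hm, hQ, hno⟩ := Nat.find_spec hex
    have hmin : ∀ Q' : F[X], Q'.natDegree < Q.natDegree → Q'.Monic → Irreducible Q' →
        ∃ x, Q'.eval x = 0 := by
      intro Q' hlt hm' hi'
      by_contra hne
      push Not at hne
      rw [hQn] at hlt
      exact Nat.find_min hex hlt ⟨Q', rfl, hm', hi', hne⟩
    obtain ⟨p, hp0, hp⟩ := alg_step φ h hφ Q hm hQ hno (by
      intro P hP
      rw [splits_iff_splits]
      by_cases hP0 : P = 0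
      · exact Or.inl hP0
      right
      intro R hR hRP
      have hRd : R.natDegree ≤ P.natDegree := natDegree_le_of_dvd hRP hP0
      have hR0 : R ≠ 0 := hR.ne_zero
      obtain ⟨x, hx⟩ := hmin (normalize R) (by
        rw [natDegree_eq_of_degree_eq (degree_normalize (p := R))]; omega) (monic_normalize hR0)
        ((normalize_associated R).symm.irreducible hR)
      refine degree_eq_one_of_irreducible_of_root hR (x := x) ?_
      have : (normalize R).IsRoot x := hx
      rw [← dvd_iff_isRoot] at this ⊢
      exact dvd_normalize_iff.1 this)
    obtain ⟨g, rfl⟩ := key p hp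
    rw [eval₂_at_apply] at hp0
    exact hno g (hinj (by rw [hp0, map_zero]))
  let ψ : F →+* K := (TrivSqZeroExt.fstHom K K K).toRingHom.comp φ
  have hψ : ∀ g, ψ g = (φ g).fst := fun g => rfl
  have hsurj : Function.Surjective ψ := by
    intro z
    by_contra hne
    push Not at hne
    obtain ⟨p, hpz, hp⟩ := transc_step φ h hφ hsc z (fun g hg => hne g hg.symm)
    obtain ⟨g, rfl⟩ := key p hp
    exact hne g hpz
  let e : F ≃+* K := RingEquiv.ofBijective ψ ⟨ψ.injective, hsurj⟩
  have he : ∀ g, e g = (φ g).fst := fun g => rfl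
  have hes : ∀ z, (φ (e.symm z)).fst = z := fun z => by rw [← he]; simp
  have hreal : ∀ r : ℝ, φ (e.symm (algebraMap ℝ K r)) = algebraMap ℝ (DualNumber K) r := by
    intro r
    obtain ⟨g, hg⟩ := hre r
    rw [← hg]
    congr 1
    rw [RingEquiv.symm_apply_eq, he, hg]
    rfl
  let Dl : K →ₗ[ℝ] K :=
    { toFun := fun z => (φ (e.symm z)).snd
      map_add' := fun x y => by simp
      map_smul' := fun r x => by
        rw [Algebra.smul_def, map_mul, map_mul, hreal, TrivSqZeroExt.snd_mul]
        simp [Algebra.smul_def, TrivSqZeroExt.algebraMap_eq_inl'] }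
  refine ⟨Derivation.mk' Dl ?_, ?_⟩
  · intro a b
    change (φ (e.symm (a * b))).snd = a • (φ (e.symm b)).snd + b • (φ (e.symm a)).snd
    rw [map_mul, map_mul, TrivSqZeroExt.snd_mul, hes, hes]
    simp [mul_comm]
  · intro z hz
    have := (hφ (e.symm z)).2 (by rw [hes]; exact hz)
    rw [hes] at this
    exact this

end KLZorn



section KLUltra
open Filter Topology ENNReal

/-- The ultralimit of `‖c k‖ ^ s k`. -/
noncomputable def uval (s : ℕ → ℝ) (c : ℕ → ℂ) : ℝ≥0∞ :=
  ((hyperfilter ℕ).map (fun k => ‖c k‖ₑ ^ (s k))).lim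

variable {s : ℕ → ℝ}

theorem uval_tendsto (s : ℕ → ℝ) (c : ℕ → ℂ) :
    Tendsto (fun k => ‖c k‖ₑ ^ (s k)) (hyperfilter ℕ : Filter ℕ) (𝓝 (uval s c)) :=
  Ultrafilter.le_nhds_lim ((hyperfilter ℕ).map (fun k => ‖c k‖ₑ ^ (s k)))

theorem uval_eq {c : ℕ → ℂ} {l : ℝ≥0∞}
    (h : Tendsto (fun k => ‖c k‖ₑ ^ (s k)) (hyperfilter ℕ : Filter ℕ) (𝓝 l)) : uval s c = l :=
  tendsto_nhds_unique (uval_tendsto s c) h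

theorem uval_congr {c d : ℕ → ℂ} (h : ∀ᶠ k in (hyperfilter ℕ : Filter ℕ), c k = d k) :
    uval s c = uval s d := by
  apply uval_eq
  refine (uval_tendsto s d).congr' ?_
  filter_upwards [h] with k hk
  rw [hk]

theorem uval_mul (hs : ∀ k, 0 < s k) {c d : ℕ → ℂ} (hc : uval s c ≠ ⊤) (hd : uval s d ≠ ⊤) :
    uval s (c * d) = uval s c * uval s d := by
  apply uval_eq
  have := ENNReal.Tendsto.mul (uval_tendsto s c) (Or.inr hd) (uval_tendsto s d) (Or.inr hc)
  refine this.congr fun k => ?_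
  rw [Pi.mul_apply, enorm_mul, ENNReal.mul_rpow_of_nonneg _ _ (hs k).le]

theorem rpow_tendsto_one {x : ℝ≥0∞} (h0 : x ≠ 0) (h1 : x ≠ ⊤) (hs : Tendsto s atTop (𝓝 0)) :
    Tendsto (fun k => x ^ (s k)) (hyperfilter ℕ : Filter ℕ) (𝓝 1) := by
  have hs' : Tendsto s (hyperfilter ℕ : Filter ℕ) (𝓝 0) := hs.mono_left Nat.hyperfilter_le_atTop
  lift x to NNReal using h1
  have hx : 0 < x := by
    rw [pos_iff_ne_zero]; exact_mod_cast h0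
  have := ((Real.continuous_const_rpow (a := (x:ℝ)) (by exact_mod_cast hx.ne')).tendsto 0).comp hs'
  have h2 := (ENNReal.tendsto_ofReal this)
  rw [Real.rpow_zero, ENNReal.ofReal_one] at h2
  refine h2.congr fun k => ?_
  simp only [Function.comp]
  rw [← ENNReal.ofReal_rpow_of_pos (by exact_mod_cast hx)]
  simp

theorem uval_const (hs : Tendsto s atTop (𝓝 0)) {z : ℂ} (hz : z ≠ 0) :
    uval s (fun _ => z) = 1 := by
  apply uval_eq
  exact rpow_tendsto_one (by simpa using hz) (by simp) hs

theorem uval_zero (hs : ∀ k, 0 < s k) : uval s 0 = 0 := by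
  apply uval_eq
  refine tendsto_const_nhds.congr fun k => ?_
  simp [hs k]

theorem uval_mono (hs : ∀ k, 0 < s k) {c d : ℕ → ℂ} (h : ∀ k, ‖c k‖ ≤ ‖d k‖) :
    uval s c ≤ uval s d := by
  refine le_of_tendsto_of_tendsto' (uval_tendsto s c) (uval_tendsto s d) fun k => ?_
  apply ENNReal.rpow_le_rpow _ (hs k).le
  exact enorm_le_iff_norm_le.2 (h k)

theorem uval_add (hs : ∀ k, 0 < s k) (hs0 : Tendsto s atTop (𝓝 0)) (c d : ℕ → ℂ) :
    uval s (c + d) ≤ max (uval s c) (uval s d) := by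
  have h1 := (uval_tendsto s c).max (uval_tendsto s d)
  have h2 := rpow_tendsto_one (x := 2) (by simp) (by simp) hs0
  have h3 := ENNReal.Tendsto.mul h2 (Or.inl one_ne_zero) h1 (Or.inr one_ne_top)
  rw [one_mul] at h3
  refine le_of_tendsto_of_tendsto' (uval_tendsto s (c + d)) h3 fun k => ?_
  have : ‖(c + d) k‖ₑ ≤ 2 * max ‖c k‖ₑ ‖d k‖ₑ := by
    refine (enorm_add_le _ _).trans ?_
    rw [two_mul]
    exact add_le_add (le_max_left _ _) (le_max_right _ _)
  refine (ENNReal.rpow_le_rpow this (hs k).le).trans ?_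
  rw [ENNReal.mul_rpow_of_nonneg _ _ (hs k).le]
  gcongr
  rcases le_total ‖c k‖ₑ ‖d k‖ₑ with h | h
  · rw [max_eq_right h]; exact le_max_right _ _
  · rw [max_eq_left h]; exact le_max_left _ _

theorem uval_neg (c : ℕ → ℂ) : uval s (-c) = uval s c := by
  apply uval_eq
  refine (uval_tendsto s c).congr fun k => ?_
  simp

theorem uval_inv (hs : ∀ k, 0 < s k) {c : ℕ → ℂ} (hc : uval s c ≠ 0) :
    uval s (c⁻¹) = (uval s c)⁻¹ ∧ ∀ᶠ k in (hyperfilter ℕ : Filter ℕ), c k ≠ 0 := by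
  have hev : ∀ᶠ k in (hyperfilter ℕ : Filter ℕ), ‖c k‖ₑ ^ (s k) ≠ 0 :=
    (uval_tendsto s c).eventually_ne hc
  have h2 : ∀ᶠ k in (hyperfilter ℕ : Filter ℕ), c k ≠ 0 := by
    filter_upwards [hev] with k hk hcon
    apply hk
    rw [hcon]; simp [hs k]
  refine ⟨?_, h2⟩
  apply uval_eq
  refine (ENNReal.tendsto_inv_iff.2 (uval_tendsto s c)).congr' ?_
  filter_upwards [h2] with k hk
  rw [Pi.inv_apply, enorm_inv hk, ENNReal.inv_rpow]

/-- Ring of moderately growing sequences. -/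
noncomputable def modRing (s : ℕ → ℝ) (hs : ∀ k, 0 < s k) (hs0 : Tendsto s atTop (𝓝 0)) :
    Subalgebra ℝ (ℕ → ℂ) where
  carrier := {c | uval s c ≠ ⊤}
  mul_mem' := by
    intro a b ha hb
    rw [Set.mem_setOf_eq, uval_mul hs ha hb]
    exact ENNReal.mul_ne_top ha hb
  add_mem' := by
    intro a b ha hb
    exact ((uval_add hs hs0 a b).trans_lt (max_lt (lt_top_iff_ne_top.2 ha)
      (lt_top_iff_ne_top.2 hb))).ne
  algebraMap_mem' := by
    intro r
    by_cases hr : r = 0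
    · rw [hr, map_zero]
      rw [Set.mem_setOf_eq, uval_zero hs]; simp
    · have : algebraMap ℝ (ℕ → ℂ) r = fun _ => (r : ℂ) := by ext; simp
      rw [this, Set.mem_setOf_eq, uval_const hs0 (by exact_mod_cast hr)]
      simp

theorem exists_ultra (hs : ∀ k, 0 < s k) (hs0 : Tendsto s atTop (𝓝 0)) :
    ∃ (K : Type) (_ : Field K) (_ : Algebra ℝ K) (N : AbsoluteValue K ℝ)
      (π : modRing s hs hs0 →ₐ[ℝ] K), Function.Surjective π ∧
      ∀ c, N (π c) = (uval s c.1).toReal := by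
  set R := modRing s hs hs0 with hR
  have hRt : ∀ c : R, uval s c.1 ≠ ⊤ := fun c => c.2
  let J : Ideal R :=
    { carrier := {c | uval s c.1 = 0}
      zero_mem' := uval_zero hs
      add_mem' := by
        intro a b ha hb
        have := uval_add hs hs0 a.1 b.1
        rw [Set.mem_setOf_eq] at ha hb
        rw [ha, hb, max_self] at this
        exact le_antisymm this bot_le
      smul_mem' := by
        intro a b hb
        rw [Set.mem_setOf_eq] at hb
        change uval s (a.1 * b.1) = 0
        rw [uval_mul hs a.2 b.2, hb, mul_zero] }
  have hJ : ∀ c : R, c ∈ J ↔ uval s c.1 = 0 := fun c => Iff.rfl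
  have h1v : uval s 1 = 1 := uval_const hs0 one_ne_zero
  have hmax : J.IsMaximal := by
    rw [Ideal.isMaximal_iff]
    refine ⟨?_, ?_⟩
    · rw [hJ]
      change uval s 1 ≠ 0
      rw [h1v]; simp
    · intro J' x hJJ' hx hxJ'
      rw [hJ] at hx
      obtain ⟨hi1, hi2⟩ := uval_inv hs hx
      let y : R := ⟨x.1⁻¹, by
        change uval s _ ≠ ⊤
        rw [hi1]; simpa using hx⟩
      have h1 : 1 - x * y ∈ J := by
        rw [hJ, ← uval_zero hs]
        apply uval_congr
        filter_upwards [hi2] with k hk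
        have hk' : x.1 k ≠ 0 := hk
        change 1 - x.1 k * (x.1 k)⁻¹ = 0
        rw [mul_inv_cancel₀ hk', sub_self]
      have : (1:R) = (1 - x * y) + x * y := by ring
      rw [this]
      exact J'.add_mem (hJJ' h1) (J'.mul_mem_right _ hxJ')
  let _ : Field (R ⧸ J) := Ideal.Quotient.field J
  let π : R →ₐ[ℝ] R ⧸ J := Ideal.Quotient.mkₐ ℝ J
  have hπs : Function.Surjective π := Ideal.Quotient.mk_surjective
  have hπ0 : ∀ c, π c = 0 ↔ uval s c.1 = 0 := fun c => Ideal.Quotient.eq_zero_iff_mem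
  have hv : ∀ c d : R, π c = π d → uval s c.1 ≤ uval s d.1 := by
    intro c d hcd
    have h1 : uval s (c - d).1 = 0 := by rw [← hπ0, map_sub, hcd, sub_self]
    have h2 := uval_add hs hs0 d.1 (c-d).1
    rw [h1] at h2
    have h3 : d.1 + (c-d).1 = c.1 := by
      change d.1 + (c.1 - d.1) = c.1
      ring
    rw [h3] at h2
    simpa using h2
  let g : R ⧸ J → R := Function.surjInv hπs
  have hg : ∀ x, π (g x) = x := Function.surjInv_eq hπs
  have key : ∀ c : R, uval s (g (π c)).1 = uval s c.1 := fun c =>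
    le_antisymm (hv _ _ (hg _)) (hv _ _ (hg _).symm)
  let N : AbsoluteValue (R ⧸ J) ℝ :=
    { toFun := fun x => (uval s (g x).1).toReal
      map_mul' := by
        intro x y
        have : uval s (g (x * y)).1 = uval s (g x * g y).1 := by
          rw [← key (g x * g y), map_mul, hg, hg]
        rw [this]
        change (uval s ((g x).1 * (g y).1)).toReal = _
        rw [uval_mul hs (hRt _) (hRt _), ENNReal.toReal_mul]
      nonneg' := fun x => ENNReal.toReal_nonneg
      eq_zero' := by
        intro x
        rw [ENNReal.toReal_eq_zero_iff, or_iff_left (hRt _), ← hπ0, hg]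
      add_le' := by
        intro x y
        have : uval s (g (x + y)).1 = uval s (g x + g y).1 := by
          rw [← key (g x + g y), map_add, hg, hg]
        rw [this, ← ENNReal.toReal_add (hRt _) (hRt _)]
        apply ENNReal.toReal_mono (ENNReal.add_ne_top.2 ⟨hRt _, hRt _⟩)
        refine (uval_add hs hs0 (g x).1 (g y).1).trans ?_
        exact max_le le_self_add le_add_self }
  refine ⟨R ⧸ J, inferInstance, inferInstance, N, π, hπs, ?_⟩
  intro c
  change (uval s (g (π c)).1).toReal = _
  rw [key]


theorem exists_good_field (hs : ∀ k, 0 < s k) (hs0 : Tendsto s atTop (𝓝 0)) :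
    ∃ (K : Type) (_ : Field K) (_ : Algebra ℝ K) (N : AbsoluteValue K ℝ)
      (π : modRing s hs hs0 →ₐ[ℝ] K) (D : Derivation ℝ K K), Nice N ∧
      (∀ c, N (π c) = (uval s c.1).toReal) ∧
      ∀ z, z ≠ 0 → N (D z - algebraMap ℝ K (Real.log (N z)) * z) < N z := by
  obtain ⟨K, _, _, N, π, hπ, hN⟩ := exists_ultra hs hs0
  have hRt : ∀ c : modRing s hs hs0, uval s c.1 ≠ ⊤ := fun c => c.2
  have hnice : Nice N := by
    constructor
    · intro x y
      obtain ⟨c, rfl⟩ := hπ x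
      obtain ⟨d, rfl⟩ := hπ y
      rw [← map_add, hN, hN, hN, ← ENNReal.toReal_max (hRt _) (hRt _)]
      apply ENNReal.toReal_mono
      · rcases max_cases (uval s c.1) (uval s d.1) with h | h
        · rw [h.1]; exact hRt _
        · rw [h.1]; exact hRt _
      · exact uval_add hs hs0 c.1 d.1
    · intro r hr
      have : algebraMap ℝ K r = π (algebraMap ℝ _ r) := (π.commutes r).symm
      rw [this, hN]
      have h2 : (algebraMap ℝ (modRing s hs hs0) r).1 = fun _ => (r : ℂ) := by ext; simp
      rw [h2, uval_const hs0 (by exact_mod_cast hr)]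
      simp
  have hac : IsAlgClosed K := by
    apply IsAlgClosed.of_exists_root
    intro p hp hirr
    have hd : 0 < p.natDegree := hirr.natDegree_pos
    set d := p.natDegree with hdd
    choose c hc using fun i => hπ (p.coeff i)
    have hroot : ∀ k, ∃ x : ℂ, x ^ d + ∑ i ∈ Finset.range d, (c i).1 k * x ^ i = 0 := by
      intro k
      let P : Polynomial ℂ := Polynomial.X ^ d +
        ∑ i ∈ Finset.range d, Polynomial.C ((c i).1 k) * Polynomial.X ^ i
      have hdeg : P.degree = d := by
        apply Polynomial.degree_eq_of_le_of_coeff_ne_zero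
        · refine (Polynomial.degree_add_le _ _).trans (max_le (by simp) ?_)
          refine (Polynomial.degree_sum_le _ _).trans (Finset.sup_le fun i hi => ?_)
          refine (Polynomial.degree_C_mul_X_pow_le _ _).trans ?_
          exact_mod_cast (Finset.mem_range.1 hi).le
        · simp only [P, Polynomial.coeff_add, Polynomial.coeff_X_pow, Polynomial.finset_sum_coeff,
            Polynomial.coeff_C_mul]
          rw [Finset.sum_eq_zero]
          · simp
          · intro i hi
            have := Finset.mem_range.1 hi
            simp; omega
      obtain ⟨x, hx⟩ := IsAlgClosed.exists_root P (by
        rw [hdeg]; exact_mod_cast hd.ne')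
      refine ⟨x, ?_⟩
      simpa [P, Polynomial.eval_finset_sum] using hx
    choose x hx using hroot
    let b : ℕ → ℂ := fun k => 1 + ∑ i ∈ Finset.range d, (‖(c i).1 k‖ : ℂ)
    have hb : b ∈ modRing s hs hs0 := by
      have : b = 1 + ∑ i ∈ Finset.range d, fun k => (‖(c i).1 k‖ : ℂ) := by
        ext k; simp [b]
      rw [this]
      refine add_mem (one_mem _) (sum_mem fun i _ => ?_)
      refine ((uval_mono hs (d := (c i).1) fun k => ?_).trans_lt
        (lt_top_iff_ne_top.2 (hRt (c i)))).ne
      simp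
    have hxb : ∀ k, ‖x k‖ ≤ ‖b k‖ := by
      intro k
      have hbk : ‖b k‖ = 1 + ∑ i ∈ Finset.range d, ‖(c i).1 k‖ := by
        have : b k = ((1 + ∑ i ∈ Finset.range d, ‖(c i).1 k‖ : ℝ) : ℂ) := by simp [b]
        rw [this, Complex.norm_real, Real.norm_of_nonneg (by positivity)]
      rw [hbk]
      by_cases h1 : ‖x k‖ ≤ 1
      · have : (0:ℝ) ≤ ∑ i ∈ Finset.range d, ‖(c i).1 k‖ := by positivity
        linarith
      · push Not at h1
        have h2 : ‖x k‖ ^ d ≤ (∑ i ∈ Finset.range d, ‖(c i).1 k‖) * ‖x k‖ ^ (d - 1) := by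
          rw [← norm_pow, eq_neg_of_add_eq_zero_left (hx k), norm_neg, Finset.sum_mul]
          refine (norm_sum_le _ _).trans (Finset.sum_le_sum fun i hi => ?_)
          rw [norm_mul, norm_pow]
          gcongr
          · exact h1.le
          · have := Finset.mem_range.1 hi
            omega
        have h3 : ‖x k‖ ^ d = ‖x k‖ * ‖x k‖ ^ (d - 1) := by
          rw [← pow_succ']; congr 1; omega
        rw [h3] at h2
        have := le_of_mul_le_mul_right h2 (by positivity)
        linarith
    let xx : modRing s hs hs0 := ⟨x, ((uval_mono hs hxb).trans_lt (lt_top_iff_ne_top.2 hb)).ne⟩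
    refine ⟨π xx, ?_⟩
    rw [hp.as_sum, ← hdd]
    simp only [Polynomial.eval_add, Polynomial.eval_pow, Polynomial.eval_X,
      Polynomial.eval_finset_sum, Polynomial.eval_mul, Polynomial.eval_C]
    simp only [← hc, ← map_pow, ← map_mul, ← map_sum, ← map_add]
    rw [← map_zero π]
    congr 1
    apply Subtype.ext
    funext k
    have := hx k
    simpa [xx] using this
  have hsc : ∀ (c : ℕ → K) (r : ℕ → ℝ), (∀ i l, i < l → N (c l - c i) < r i) →
      ∃ w, ∀ i, N (w - c i) ≤ r i := by
    intro c r hcr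
    choose C hC using fun i => hπ (c i)
    have hr : ∀ i, 0 < r i := fun i => (N.nonneg _).trans_lt (hcr i (i+1) (Nat.lt_succ_self i))
    let T : ℕ → ℕ → Prop := fun m k => ∀ l ≤ m, ∀ i < l,
      ‖((C l).1 - (C i).1) k‖ₑ ^ (s k) < ENNReal.ofReal (r i)
    have hT : ∀ m, ∀ᶠ k in (hyperfilter ℕ : Filter ℕ), m ≤ k ∧ T m k := by
      intro m
      refine ((eventually_ge_atTop m).filter_mono Nat.hyperfilter_le_atTop).and ?_
      have : ∀ l ∈ Finset.range (m+1), ∀ i ∈ Finset.range l,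
          ∀ᶠ k in (hyperfilter ℕ : Filter ℕ),
          ‖((C l).1 - (C i).1) k‖ₑ ^ (s k) < ENNReal.ofReal (r i) := by
        intro l _ i hi
        have h1 := hcr i l (Finset.mem_range.1 hi)
        rw [← hC, ← hC, ← map_sub, hN] at h1
        refine (uval_tendsto s _).eventually_lt_const ?_
        exact (ENNReal.lt_ofReal_iff_toReal_lt (hRt (C l - C i))).2 h1
      have h2 := (Filter.eventually_all_finset (Finset.range (m+1))).2 fun l hl =>
        (Filter.eventually_all_finset (Finset.range l)).2 (this l hl)
      filter_upwards [h2] with k hk l hl i hi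
      exact hk l (by simpa using Nat.lt_succ_of_le hl) i (by simpa using hi)
    classical
    let w : ℕ → ℂ := fun k => (C (Nat.findGreatest (fun m => T m k) k)).1 k
    have hw : ∀ i, uval s (w - (C i).1) ≤ ENNReal.ofReal (r i) := by
      intro i
      refine le_of_tendsto (uval_tendsto s _) ?_
      filter_upwards [hT (i+1)] with k hk
      have h1 : i + 1 ≤ Nat.findGreatest (fun m => T m k) k :=
        Nat.le_findGreatest hk.1 hk.2
      have h2 := Nat.findGreatest_spec (P := fun m => T m k) hk.1 hk.2
      exact (h2 _ le_rfl i (by omega)).le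
    have hwR : w ∈ modRing s hs hs0 := by
      have h1 : w - (C 0).1 ∈ modRing s hs hs0 :=
        ((hw 0).trans_lt ENNReal.ofReal_lt_top).ne
      have := add_mem h1 (C 0).2
      simpa using this
    refine ⟨π ⟨w, hwR⟩, fun i => ?_⟩
    rw [← hC, ← map_sub, hN]
    exact ENNReal.toReal_le_of_le_ofReal (hr i).le (hw i)
  obtain ⟨D, hD⟩ := exists_derivation hnice hsc
  exact ⟨K, _, _, N, π, D, hnice, hN, hD⟩

end KLUltra



section KLPoly
open Filter Topology ENNReal MvPolynomial

theorem kl_poly {σ : Type} [Fintype σ] {J : Type} (F : MvPolynomial σ ℝ)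
    (ρ : σ → MvPolynomial σ ℝ) (g : J → MvPolynomial σ ℝ) (c M : ℝ)
    (halg : ∀ (K : Type) [Field K] [Algebra ℝ K] (D : Derivation ℝ K K) (a : σ → K),
      (∀ j, aeval a (g j) = 0) → D (aeval a F) = ∑ i, aeval a (ρ i) * D (a i)) :
    ∃ θ η : ℝ, 0 < θ ∧ θ < 1 ∧ 0 < η ∧ ∀ x : σ → ℝ, (∀ i, |x i| ≤ M) →
      (∀ j, eval x (g j) = 0) → |eval x F - c| < η → ∀ B, 0 ≤ B → (∀ i, |eval x (ρ i)| ≤ B) →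
      |eval x F - c| ^ θ ≤ B := by
  by_contra hcon
  push Not at hcon
  have hθ : ∀ k : ℕ, 0 < 1 - 1 / ((k:ℝ) + 2) ∧ 1 - 1 / ((k:ℝ) + 2) < 1 ∧ 0 < 1 / ((k:ℝ) + 2) := by
    intro k
    have h1 : (0:ℝ) < 1 / ((k:ℝ) + 2) := by positivity
    have h2 : 1 / ((k:ℝ) + 2) < 1 := by
      rw [div_lt_one (by positivity)]
      have : (0:ℝ) ≤ k := by positivity
      linarith
    exact ⟨by linarith, by linarith, h1⟩
  choose x hxM hxg hxη B hB0 hB hlt using fun k : ℕ =>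
    hcon (1 - 1 / ((k:ℝ) + 2)) (1 / ((k:ℝ) + 2)) (hθ k).1 (hθ k).2.1 (hθ k).2.2
  set e : ℕ → ℝ := fun k => |eval (x k) F - c| with he
  have hepos : ∀ k, 0 < e k := by
    intro k
    rcases (abs_nonneg (eval (x k) F - c)).lt_or_eq with h | h
    · exact h
    · have := hlt k
      rw [← h, Real.zero_rpow (hθ k).1.ne'] at this
      exact absurd this (not_lt.2 (hB0 k))
  have helog : ∀ k : ℕ, Real.log ((k:ℝ) + 2) < - Real.log (e k) := by
    intro k
    have := Real.log_lt_log (hepos k) (hxη k)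
    rw [one_div, Real.log_inv] at this
    linarith
  have hlogpos : ∀ k : ℕ, 0 < Real.log ((k:ℝ) + 2) := by
    intro k
    apply Real.log_pos
    have : (0:ℝ) ≤ k := by positivity
    linarith
  have hL : ∀ k, 0 < - Real.log (e k) := fun k => (hlogpos k).trans (helog k)
  set s : ℕ → ℝ := fun k => (- Real.log (e k))⁻¹ with hsdef
  have hs : ∀ k, 0 < s k := fun k => inv_pos.2 (hL k)
  have hs0 : Tendsto s atTop (𝓝 0) := by
    apply Tendsto.inv_tendsto_atTop
    refine tendsto_atTop_mono (fun k => (helog k).le) ?_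
    apply Real.tendsto_log_atTop.comp
    exact tendsto_atTop_add_const_right _ _ tendsto_natCast_atTop_atTop
  obtain ⟨K, _, _, N, π, D, hN, hNv, hD⟩ := exists_good_field hs hs0
  have hRt : ∀ c : modRing s hs hs0, uval s c.1 ≠ ⊤ := fun c => c.2
  have ha1 : ∀ i, uval s (fun k => (x k i : ℂ)) ≤ 1 := by
    intro i
    have hz : (((|M| + 1 : ℝ)) : ℂ) ≠ 0 := by
      have : (0:ℝ) < |M| + 1 := by positivity
      exact_mod_cast this.ne'
    rw [← uval_const hs0 hz]
    apply uval_mono hs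
    intro k
    rw [Complex.norm_real, Complex.norm_real, Real.norm_eq_abs, Real.norm_eq_abs]
    rw [abs_of_pos (a := |M| + 1) (by positivity)]
    have := hxM k i
    have := le_abs_self M
    linarith
  let a : σ → modRing s hs hs0 := fun i => ⟨fun k => (x k i : ℂ),
    ((ha1 i).trans_lt one_lt_top).ne⟩
  let α : σ → K := fun i => π (a i)
  have hae : ∀ P : MvPolynomial σ ℝ, aeval α P = π (aeval a P) := by
    intro P
    rw [← AlgHom.comp_apply, MvPolynomial.comp_aeval]
  have hcomp : ∀ (P : MvPolynomial σ ℝ) (k : ℕ), (aeval a P).1 k = ((eval (x k) P : ℝ) : ℂ) := by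
    intro P k
    let f : modRing s hs hs0 →ₐ[ℝ] ℂ := (Pi.evalAlgHom ℝ (fun _ : ℕ => ℂ) k).comp
      (modRing s hs hs0).val
    change f (aeval a P) = _
    rw [← AlgHom.comp_apply, MvPolynomial.comp_aeval]
    change aeval (algebraMap ℝ ℂ ∘ (x k)) P = algebraMap ℝ ℂ (eval (x k) P)
    rw [MvPolynomial.aeval_algebraMap_apply]
    rfl
  have hg0 : ∀ j, aeval α (g j) = 0 := by
    intro j
    rw [hae, ← map_zero π]
    congr 1
    apply Subtype.ext
    funext k
    rw [hcomp, hxg]; simp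
  have hDF := halg K D α hg0
  set ε : K := aeval α F - algebraMap ℝ K c with hε
  have hE : (0:ℝ) < Real.exp (-1) := Real.exp_pos _
  have hNε : N ε = Real.exp (-1) := by
    have : ε = π (aeval a F - algebraMap ℝ _ c) := by rw [map_sub, ← hae, AlgHom.commutes]
    rw [this, hNv]
    have h1 : uval s (aeval a F - algebraMap ℝ (modRing s hs hs0) c).1 =
        ENNReal.ofReal (Real.exp (-1)) := by
      apply uval_eq
      refine tendsto_const_nhds.congr fun k => ?_
      have h2 : (aeval a F - algebraMap ℝ (modRing s hs hs0) c).1 k =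
          ((eval (x k) F - c : ℝ) : ℂ) := by
        change (aeval a F).1 k - (c : ℂ) = _
        rw [hcomp]; simp
      rw [h2, ← ofReal_norm, Complex.norm_real, Real.norm_eq_abs,
        ENNReal.ofReal_rpow_of_pos (hepos k)]
      congr 1
      change _ = e k ^ s k
      rw [Real.rpow_def_of_pos (hepos k)]
      congr 1
      simp only [hsdef]
      have := (hL k).ne'
      have : Real.log (e k) ≠ 0 := by intro h; simp [h] at this
      field_simp
    rw [h1, ENNReal.toReal_ofReal hE.le]
  have hρ : ∀ i, N (aeval α (ρ i)) ≤ Real.exp (-1) := by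
    intro i
    rw [hae, hNv]
    apply ENNReal.toReal_le_of_le_ofReal hE.le
    have hlim : Tendsto (fun k : ℕ => ENNReal.ofReal (Real.exp (-(1 - 1 / ((k:ℝ) + 2)))))
        (hyperfilter ℕ : Filter ℕ) (𝓝 (ENNReal.ofReal (Real.exp (-1)))) := by
      refine Tendsto.mono_left ?_ Nat.hyperfilter_le_atTop
      apply ENNReal.tendsto_ofReal
      apply (Real.continuous_exp.tendsto _).comp
      apply Tendsto.neg
      have : Tendsto (fun k : ℕ => 1 / ((k:ℝ) + 2)) atTop (𝓝 0) := by
        simp only [one_div]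
        apply Tendsto.inv_tendsto_atTop
        exact tendsto_atTop_add_const_right _ _ tendsto_natCast_atTop_atTop
      simpa using tendsto_const_nhds.sub this
    refine le_of_tendsto_of_tendsto' (uval_tendsto s _) hlim fun k => ?_
    rw [hcomp, ← ofReal_norm, Complex.norm_real, Real.norm_eq_abs,
      ENNReal.ofReal_rpow_of_nonneg (abs_nonneg _) (hs k).le]
    apply ENNReal.ofReal_le_ofReal
    refine (Real.rpow_le_rpow (abs_nonneg _) ((hB k i).trans (hlt k).le) (hs k).le).trans ?_
    change ((e k) ^ _) ^ _ ≤ _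
    rw [← Real.rpow_mul (hepos k).le, Real.rpow_def_of_pos (hepos k)]
    apply Real.exp_le_exp.2
    simp only [hsdef]
    have := (hL k).ne'
    have : Real.log (e k) ≠ 0 := by intro h; simp [h] at this
    apply le_of_eq
    field_simp
  have hDa : ∀ i, N (D (α i)) < 1 := by
    intro i
    have hle : N (α i) ≤ 1 := by
      change N (π (a i)) ≤ 1
      rw [hNv]
      exact ENNReal.toReal_mono one_ne_top (ha1 i)
    by_cases h0 : α i = 0
    · rw [h0]; simp
    have h1 := (hD _ h0).trans_le hle
    rcases hle.lt_or_eq with h2 | h2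
    · have h3 := hN.add_lt h1 ((hN.re_mul_le (Real.log (N (α i))) (α i)).trans_lt h2)
      simpa using h3
    · rw [h2] at h1
      simpa using h1
  have hDε : N (D ε) < Real.exp (-1) := by
    have : D ε = ∑ i, aeval α (ρ i) * D (α i) := by
      rw [hε, map_sub, hDF, Derivation.map_algebraMap, sub_zero]
    rw [this]
    apply hN.sum_lt _ _ hE
    intro i _
    rw [map_mul]
    calc N (aeval α (ρ i)) * N (D (α i)) ≤ Real.exp (-1) * N (D (α i)) :=
          mul_le_mul_of_nonneg_right (hρ i) (N.nonneg _)
      _ < Real.exp (-1) * 1 := mul_lt_mul_of_pos_left (hDa i) hE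
      _ = _ := mul_one _
  have hε0 : ε ≠ 0 := by
    intro h
    rw [h, map_zero] at hNε
    exact hE.ne hNε
  have h1 := hD ε hε0
  rw [hNε, Real.log_exp] at h1
  have h2 := hN.sub_lt h1 hDε
  have h3 : D ε - algebraMap ℝ K (-1) * ε - D ε = ε := by simp
  rw [h3, hNε] at h2
  exact lt_irrefl _ h2

end KLPoly



section HooiAlg
variable {N : ℕ} {I r : Fin N → ℕ} {S : Type*} [CommRing S] [Algebra ℝ S]

/-- Core tensor over a general algebra. -/
noncomputable def coreS (X : ((n : Fin N) → Fin (I n)) → ℝ)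
    (A : (n : Fin N) → Matrix (Fin (I n)) (Fin (r n)) S) (c : (n : Fin N) → Fin (r n)) : S :=
  ∑ idx : ((n : Fin N) → Fin (I n)), algebraMap ℝ S (X idx) * ∏ n, A n (idx n) (c n)

/-- `Gmat` over a general algebra. -/
noncomputable def GS (X : ((n : Fin N) → Fin (I n)) → ℝ)
    (A : (n : Fin N) → Matrix (Fin (I n)) (Fin (r n)) S) (n : Fin N) :
    Matrix (Fin (I n)) ((m : {m : Fin N // m ≠ n}) → Fin (r m.1)) S :=
  fun j c => ∑ idx : ((m : {m : Fin N // m ≠ n}) → Fin (I m.1)),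
    algebraMap ℝ S (X (fun i => if h : i = n then Fin.cast (by rw [h]) j else idx ⟨i, h⟩)) *
      ∏ m : {m : Fin N // m ≠ n}, A m.1 (idx m) (c m)

/-- objective over a general algebra. -/
noncomputable def fS (X : ((n : Fin N) → Fin (I n)) → ℝ)
    (A : (n : Fin N) → Matrix (Fin (I n)) (Fin (r n)) S) : S := ∑ c, coreS X A c ^ 2

/-- Riemannian gradient (half) over a general algebra. -/
noncomputable def RS (X : ((n : Fin N) → Fin (I n)) → ℝ)
    (A : (n : Fin N) → Matrix (Fin (I n)) (Fin (r n)) S) (n : Fin N) :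
    Matrix (Fin (I n)) (Fin (r n)) S :=
  GS X A n * (GS X A n)ᵀ * A n - A n * (A n)ᵀ * (GS X A n * (GS X A n)ᵀ * A n)

theorem GS_real (X : ((n : Fin N) → Fin (I n)) → ℝ)
    (A : (n : Fin N) → Matrix (Fin (I n)) (Fin (r n)) ℝ) (n : Fin N) : GS X A n = Gmat X A n := rfl

theorem fS_real (X : ((n : Fin N) → Fin (I n)) → ℝ)
    (A : (n : Fin N) → Matrix (Fin (I n)) (Fin (r n)) ℝ) : fS X A = fval X A := rfl

section nat
variable {T : Type*} [CommRing T] [Algebra ℝ T] (f : S →ₐ[ℝ] T)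
  (X : ((n : Fin N) → Fin (I n)) → ℝ) (A : (n : Fin N) → Matrix (Fin (I n)) (Fin (r n)) S)

theorem coreS_map (c) : f (coreS X A c) = coreS X (fun n => (A n).map f) c := by
  simp [coreS, map_sum, map_prod]

theorem fS_map : f (fS X A) = fS X (fun n => (A n).map f) := by
  simp [fS, map_sum, coreS_map]

theorem GS_map (n) : (GS X A n).map f = GS X (fun n => (A n).map f) n := by
  ext i c
  simp [GS, map_sum, map_prod]

theorem RS_map (n) : (RS X A n).map f = RS X (fun n => (A n).map f) n := by
  have hm : ∀ {a b c : Type} [Fintype b] (L : Matrix a b S) (M : Matrix b c S),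
      (L * M).map f = L.map f * M.map f := by
    intro a b c _ L M
    ext i j
    simp [Matrix.mul_apply, map_sum]
  rw [RS, RS, Matrix.map_sub f (map_sub f)]
  simp only [hm, ← GS_map, transpose_map]

end nat

theorem sum_split (X : ((n : Fin N) → Fin (I n)) → ℝ)
    (A : (n : Fin N) → Matrix (Fin (I n)) (Fin (r n)) S) (n : Fin N) (u : Fin (I n) → S)
    (c' : (m : {m : Fin N // m ≠ n}) → Fin (r m.1)) :
    ∑ idx : ((n : Fin N) → Fin (I n)), algebraMap ℝ S (X idx) * (u (idx n) *
      ∏ m : {m : Fin N // m ≠ n}, A m.1 (idx m.1) (c' m)) = ∑ i, u i * GS X A n i c' := by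
  rw [← (Equiv.piSplitAt n (fun m => Fin (I m))).symm.sum_comp, Fintype.sum_prod_type]
  refine Finset.sum_congr rfl fun i _ => ?_
  rw [GS, Finset.mul_sum]
  refine Finset.sum_congr rfl fun idx _ => ?_
  have h1 : (Equiv.piSplitAt n (fun m => Fin (I m))).symm (i, idx) =
      (fun m => if h : m = n then Fin.cast (by rw [h]) i else idx ⟨m, h⟩) := by
    funext m
    by_cases h : m = n
    · subst h
      simp [Equiv.piSplitAt]
    · simp [Equiv.piSplitAt, h]
  rw [h1]
  have h2 : (fun m => if h : m = n then Fin.cast (by rw [h]) i else idx ⟨m, h⟩ :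
    (m : Fin N) → Fin (I m)) n = i := by simp
  have h3 : ∀ m : {m : Fin N // m ≠ n}, (fun m => if h : m = n then Fin.cast (by rw [h]) i
    else idx ⟨m, h⟩ : (m : Fin N) → Fin (I m)) m.1 = idx m := by
    intro m
    simp [m.2]
  rw [h2]
  simp only [h3]
  ring

theorem core_split (X : ((n : Fin N) → Fin (I n)) → ℝ)
    (A : (n : Fin N) → Matrix (Fin (I n)) (Fin (r n)) S) (n : Fin N)
    (c : (n : Fin N) → Fin (r n)) :
    coreS X A c = ∑ i, A n i (c n) * GS X A n i (fun m => c m.1) := by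
  rw [← sum_split]
  rw [coreS]
  refine Finset.sum_congr rfl fun idx _ => ?_
  rw [Fintype.prod_eq_mul_prod_subtype_ne _ n]

theorem sum_c_split {M : Type*} [AddCommMonoid M] (n : Fin N)
    (h : Fin (r n) → ((m : {m : Fin N // m ≠ n}) → Fin (r m.1)) → M) :
    ∑ c : ((n : Fin N) → Fin (r n)), h (c n) (fun m => c m.1) = ∑ j, ∑ c', h j c' := by
  rw [← Fintype.sum_prod_type', ← (Equiv.piSplitAt n (fun m => Fin (r m))).sum_comp]
  rfl

theorem core_eq (X : ((n : Fin N) → Fin (I n)) → ℝ)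
    (A : (n : Fin N) → Matrix (Fin (I n)) (Fin (r n)) S) (n : Fin N)
    (c : (n : Fin N) → Fin (r n)) :
    coreS X A c = ((A n)ᵀ * GS X A n) (c n) (fun m => c m.1) := by
  rw [core_split X A n, Matrix.mul_apply]; rfl

theorem fval_eq (X : ((n : Fin N) → Fin (I n)) → ℝ)
    (A : (n : Fin N) → Matrix (Fin (I n)) (Fin (r n)) ℝ) (n : Fin N) :
    fval X A = froSq ((A n)ᵀ * Gmat X A n) := by
  rw [← fS_real, fS, froSq]
  simp only [core_eq X A n]
  exact sum_c_split n (fun j c' => (((A n)ᵀ * GS X A n) j c') ^ 2)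

theorem deriv_prod {K ι : Type*} [CommRing K] [Algebra ℝ K] [DecidableEq ι]
    (D : Derivation ℝ K K) (s : Finset ι) (f : ι → K) :
    D (∏ i ∈ s, f i) = ∑ i ∈ s, D (f i) * ∏ j ∈ s.erase i, f j := by
  induction s using Finset.induction_on with
  | empty => simp
  | insert a s ha ih =>
    rw [Finset.prod_insert ha, Derivation.leibniz, ih, Finset.sum_insert ha,
      Finset.erase_insert ha, smul_eq_mul, smul_eq_mul, Finset.mul_sum, add_comm, mul_comm]
    congr 1
    refine Finset.sum_congr rfl fun i hi => ?_
    have hia : a ≠ i := fun h => ha (h ▸ hi)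
    rw [Finset.erase_insert_of_ne hia, Finset.prod_insert (fun h => ha (Finset.mem_of_mem_erase h))]
    ring

theorem deriv_core {K : Type*} [CommRing K] [Algebra ℝ K] (D : Derivation ℝ K K)
    (X : ((n : Fin N) → Fin (I n)) → ℝ)
    (A : (n : Fin N) → Matrix (Fin (I n)) (Fin (r n)) K) (c : (n : Fin N) → Fin (r n)) :
    D (coreS X A c) = ∑ n, ∑ i, D (A n i (c n)) * GS X A n i (fun m => c m.1) := by
  simp only [← sum_split]
  rw [Finset.sum_comm, coreS, map_sum]
  refine Finset.sum_congr rfl fun idx _ => ?_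
  rw [Derivation.leibniz, Derivation.map_algebraMap, smul_zero, add_zero, smul_eq_mul,
    ← Finset.mul_sum, deriv_prod]
  congr 1
  refine Finset.sum_congr rfl fun n _ => ?_
  congr 1
  rw [Finset.prod_subtype (p := fun m => m ≠ n)]
  simp

theorem deriv_f {K : Type*} [CommRing K] [Algebra ℝ K] (D : Derivation ℝ K K)
    (X : ((n : Fin N) → Fin (I n)) → ℝ)
    (A : (n : Fin N) → Matrix (Fin (I n)) (Fin (r n)) K) :
    D (fS X A) = ∑ n, ∑ i, ∑ j, 2 * (GS X A n * (GS X A n)ᵀ * A n) i j * D (A n i j) := by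
  have h1 : D (fS X A) = ∑ c, ∑ n, ∑ i, 2 * coreS X A c *
      (D (A n i (c n)) * GS X A n i (fun m => c m.1)) := by
    rw [fS, map_sum]
    refine Finset.sum_congr rfl fun c _ => ?_
    rw [pow_two, Derivation.leibniz, deriv_core, smul_eq_mul, ← two_mul, ← mul_assoc,
      Finset.mul_sum]
    simp only [Finset.mul_sum]
  rw [h1, Finset.sum_comm]
  refine Finset.sum_congr rfl fun n _ => ?_
  rw [Finset.sum_comm]
  refine Finset.sum_congr rfl fun i _ => ?_
  simp only [core_eq X A n]
  rw [sum_c_split n (fun j c' => 2 * ((A n)ᵀ * GS X A n) j c' * (D (A n i j) * GS X A n i c'))]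
  refine Finset.sum_congr rfl fun j _ => ?_
  have : (GS X A n * (GS X A n)ᵀ * A n) i j = ∑ c', GS X A n i c' * ((A n)ᵀ * GS X A n) j c' := by
    rw [Matrix.mul_assoc, Matrix.mul_apply]
    refine Finset.sum_congr rfl fun c' _ => ?_
    congr 1
    rw [Matrix.mul_apply, Matrix.mul_apply]
    refine Finset.sum_congr rfl fun k _ => ?_
    simp [mul_comm]
  rw [this, Finset.mul_sum, Finset.sum_mul]
  refine Finset.sum_congr rfl fun c' _ => ?_
  ring

theorem skew_zero {K : Type*} [CommRing K] [Algebra ℝ K] (D : Derivation ℝ K K) {m k : ℕ}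
    (A : Matrix (Fin m) (Fin k) K) (hA : Aᵀ * A = 1) (L : Matrix (Fin k) (Fin k) K)
    (hL : Lᵀ = L) : ∑ i, ∑ j, 2 * (A * L) i j * D (A i j) = 0 := by
  let T : Fin k → Fin k → K := fun l j => ∑ i, A i l * D (A i j)
  have hT : ∀ l j, T l j + T j l = 0 := by
    intro l j
    have h1 : D ((Aᵀ * A) l j) = 0 := by
      rw [hA, Matrix.one_apply]
      split_ifs <;> simp
    rw [Matrix.mul_apply, map_sum] at h1
    simp only [Derivation.leibniz, smul_eq_mul, transpose_apply, Finset.sum_add_distrib] at h1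
    exact h1
  have h1 : ∑ i, ∑ j, (A * L) i j * D (A i j) = ∑ l, ∑ j, L l j * T l j := by
    simp only [Matrix.mul_apply, T, Finset.mul_sum, Finset.sum_mul]
    rw [Finset.sum_comm]
    conv_lhs => enter [2, j]; rw [Finset.sum_comm]
    rw [Finset.sum_comm]
    refine Finset.sum_congr rfl fun l _ => Finset.sum_congr rfl fun j _ =>
      Finset.sum_congr rfl fun i _ => ?_
    ring
  have h2 : ∑ l, ∑ j, L l j * T l j = ∑ l, ∑ j, L l j * T j l := by
    rw [Finset.sum_comm]
    refine Finset.sum_congr rfl fun l _ => Finset.sum_congr rfl fun j _ => ?_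
    rw [← hL, transpose_apply, hL]
  have h3 : ∑ i, ∑ j, 2 * (A * L) i j * D (A i j) =
      ∑ i, ∑ j, (A * L) i j * D (A i j) + ∑ i, ∑ j, (A * L) i j * D (A i j) := by
    simp only [← Finset.sum_add_distrib]
    refine Finset.sum_congr rfl fun l _ => Finset.sum_congr rfl fun j _ => ?_
    ring
  rw [h3, h1]
  nth_rewrite 2 [h2]
  simp only [← Finset.sum_add_distrib, ← mul_add, hT, mul_zero, Finset.sum_const_zero]

theorem deriv_f_RS {K : Type*} [CommRing K] [Algebra ℝ K] (D : Derivation ℝ K K)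
    (X : ((n : Fin N) → Fin (I n)) → ℝ)
    (A : (n : Fin N) → Matrix (Fin (I n)) (Fin (r n)) K) (hA : ∀ n, (A n)ᵀ * A n = 1) :
    D (fS X A) = ∑ n, ∑ i, ∑ j, 2 * RS X A n i j * D (A n i j) := by
  rw [deriv_f]
  refine Finset.sum_congr rfl fun n _ => ?_
  have := skew_zero D (A n) (hA n) ((A n)ᵀ * (GS X A n * (GS X A n)ᵀ * A n)) (by
    simp [Matrix.mul_assoc])
  rw [← sub_zero (∑ i, ∑ j, 2 * (GS X A n * (GS X A n)ᵀ * A n) i j * D (A n i j)), ← this]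
  simp only [← Finset.sum_sub_distrib]
  refine Finset.sum_congr rfl fun i _ => Finset.sum_congr rfl fun j _ => ?_
  rw [RS, Matrix.sub_apply, Matrix.mul_assoc (A n)]
  ring

open MvPolynomial in
theorem kl_hooi (X : ((n : Fin N) → Fin (I n)) → ℝ) (fbar : ℝ) :
    ∃ θ η : ℝ, 0 < θ ∧ θ < 1 ∧ 0 < η ∧
      ∀ A : (n : Fin N) → Matrix (Fin (I n)) (Fin (r n)) ℝ, TFeas A → |fval X A - fbar| < η →
        ∀ B, 0 ≤ B → (∀ n i j, |RS X A n i j| ≤ B) → |fval X A - fbar| ^ θ ≤ 2 * B := by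
  let σ := Σ n : Fin N, Fin (I n) × Fin (r n)
  let V : (n : Fin N) → Matrix (Fin (I n)) (Fin (r n)) (MvPolynomial σ ℝ) :=
    fun n => Matrix.of fun i j => MvPolynomial.X ⟨n, i, j⟩
  let J := Σ n : Fin N, Fin (r n) × Fin (r n)
  let g : J → MvPolynomial σ ℝ := fun q =>
    (((V q.1)ᵀ * V q.1 - 1 : Matrix (Fin (r q.1)) (Fin (r q.1)) (MvPolynomial σ ℝ))) q.2.1 q.2.2
  have hmap : ∀ {S : Type} [CommRing S] [Algebra ℝ S] (a : σ → S),
      (fun n => (V n).map (aeval a)) = fun n => Matrix.of (fun i j => a ⟨n, i, j⟩) := by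
    intro S _ _ a
    funext n
    ext i j
    simp [V, Matrix.map_apply]
  have hg : ∀ {S : Type} [CommRing S] [Algebra ℝ S] (a : σ → S) (q : J),
      aeval a (g q) = ∑ i, a ⟨q.1, i, q.2.1⟩ * a ⟨q.1, i, q.2.2⟩ - (1 : Matrix (Fin (r q.1)) (Fin (r q.1)) S) q.2.1 q.2.2 := by
    intro S _ _ a q
    simp only [g, Matrix.sub_apply, map_sub, Matrix.mul_apply, map_sum, map_mul, transpose_apply, V,
      Matrix.of_apply, aeval_X, Matrix.one_apply]
    congr 1
    split_ifs <;> simp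
  obtain ⟨θ, η, h1, h2, h3, h4⟩ := kl_poly (σ := σ) (J := J) (fS X V)
    (fun q => 2 * RS X V q.1 q.2.1 q.2.2) g fbar 1 (by
      intro K _ _ D a ha
      rw [fS_map, hmap, deriv_f_RS]
      · rw [Fintype.sum_sigma]
        refine Finset.sum_congr rfl fun n _ => ?_
        rw [Fintype.sum_prod_type]
        refine Finset.sum_congr rfl fun i _ => Finset.sum_congr rfl fun j _ => ?_
        congr 1
        rw [map_mul, map_ofNat]
        congr 1
        rw [← hmap, ← RS_map]
        rfl
      · intro n
        ext j l
        have := ha ⟨n, j, l⟩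
        rw [hg, sub_eq_zero] at this
        rw [Matrix.mul_apply]
        exact this)
  refine ⟨θ, η, h1, h2, h3, ?_⟩
  intro A hA hη B hB0 hB
  let x : σ → ℝ := fun q => A q.1 q.2.1 q.2.2
  have hx : (fun n => Matrix.of (fun i j => x ⟨n, i, j⟩)) = A := rfl
  have hev : ∀ P : MvPolynomial σ ℝ, eval x P = aeval x P := fun P => by
    rw [MvPolynomial.aeval_eq_eval]
  have hF : eval x (fS X V) = fval X A := by
    rw [hev, fS_map, hmap, hx, fS_real]
  rw [← hF] at hη ⊢
  refine h4 x ?_ ?_ hη (2 * B) (by linarith) ?_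
  · rintro ⟨n, i, j⟩
    have h := congrFun (congrFun (hA n) j) j
    rw [Matrix.mul_apply, Matrix.one_apply_eq] at h
    simp only [transpose_apply] at h
    have h' : A n i j * A n i j ≤ 1 := by
      rw [← h]
      exact Finset.single_le_sum (f := fun i => A n i j * A n i j)
        (fun i _ => mul_self_nonneg _) (Finset.mem_univ i)
    exact abs_le_one_iff_mul_self_le_one.2 h'
  · intro q
    rw [hev, hg, sub_eq_zero]
    have := congrFun (congrFun (hA q.1) q.2.1) q.2.2
    rw [Matrix.mul_apply] at this
    exact this
  · rintro ⟨n, i, j⟩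
    have : eval x (2 * RS X V n i j) = 2 * RS X A n i j := by
      rw [hev, map_mul, map_ofNat]
      congr 1
      have h := RS_map (aeval x) X V n
      rw [hmap, hx] at h
      rw [← h]; rfl
    rw [this, abs_mul, abs_two]
    linarith [hB n i j]

end HooiAlg



section Block

theorem dps_nonneg {ι : Type*} [Fintype ι] (v : ι → ℝ) : 0 ≤ v ⬝ᵥ v :=
  Finset.sum_nonneg fun i _ => mul_self_nonneg _

theorem froSq_nonneg' {ι κ : Type*} [Fintype ι] [Fintype κ] (M : Matrix ι κ ℝ) : 0 ≤ froSq M := by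
  unfold froSq; positivity

theorem froSq_eq_trace {ι κ : Type*} [Fintype ι] [Fintype κ] (M : Matrix ι κ ℝ) :
    froSq M = (Mᵀ * M).trace := by
  simp only [froSq, trace, diag_apply, mul_apply, transpose_apply, pow_two]
  exact Finset.sum_comm

theorem froSq_transpose {ι κ : Type*} [Fintype ι] [Fintype κ] (M : Matrix ι κ ℝ) :
    froSq Mᵀ = froSq M := by
  simp only [froSq, transpose_apply]
  exact Finset.sum_comm

theorem froSq_tm {ι κ τ : Type*} [Fintype ι] [Fintype κ] [Fintype τ] (C : Matrix ι τ ℝ)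
    (G : Matrix ι κ ℝ) : froSq (Cᵀ * G) = (Cᵀ * (G * Gᵀ) * C).trace := by
  rw [← froSq_transpose, froSq_eq_trace]
  simp [Matrix.mul_assoc]

theorem trace_qf {ι τ : Type*} [Fintype ι] [Fintype τ] (M : Matrix ι ι ℝ) (Z : Matrix ι τ ℝ) :
    (Zᵀ * M * Z).trace = ∑ j, (fun i => Z i j) ⬝ᵥ (M *ᵥ (fun i => Z i j)) := by
  simp only [trace, diag_apply]
  refine Finset.sum_congr rfl fun j _ => ?_
  rw [Matrix.mul_assoc, mul_apply]
  simp only [dotProduct, mulVec, mul_apply, transpose_apply]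

theorem froSq_cols {ι τ : Type*} [Fintype ι] [Fintype τ] (Z : Matrix ι τ ℝ) :
    froSq Z = ∑ j, (fun i => Z i j) ⬝ᵥ (fun i => Z i j) := by
  simp only [froSq, dotProduct, pow_two]
  exact Finset.sum_comm

theorem growth {m r : ℕ} (M : Matrix (Fin m) (Fin m) ℝ) (hM : Mᵀ = M)
    (A B : Matrix (Fin m) (Fin r) ℝ) (hA : Aᵀ * A = 1) (hB : Bᵀ * B = 1)
    (hfo : M * B = B * Bᵀ * (M * B)) (τ1 τ2 : ℝ)
    (h1 : ∀ x : Fin r → ℝ, τ1 * (x ⬝ᵥ x) ≤ (B *ᵥ x) ⬝ᵥ (M *ᵥ (B *ᵥ x)))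
    (h2 : ∀ u : Fin m → ℝ, Bᵀ *ᵥ u = 0 → u ⬝ᵥ (M *ᵥ u) ≤ τ2 * (u ⬝ᵥ u)) :
    (τ1 - τ2) * (r - froSq (Bᵀ * A)) ≤ (Bᵀ * M * B).trace - (Aᵀ * M * A).trace := by
  set W := Bᵀ * A with hW
  set Z := A - B * W with hZ
  set Y := B - A * Wᵀ with hY
  set H := Bᵀ * M * B with hH
  have hWt : Aᵀ * B = Wᵀ := by simp [hW]
  have hBZ : Bᵀ * Z = 0 := by
    rw [hZ, Matrix.mul_sub, ← Matrix.mul_assoc, hB, Matrix.one_mul, ← hW, sub_self]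
  have hYY : Yᵀ * Y = 1 - W * Wᵀ := by
    rw [hY, transpose_sub, transpose_mul, transpose_transpose, Matrix.sub_mul, Matrix.mul_sub,
      Matrix.mul_sub, hB, ← Matrix.mul_assoc, ← hW]
    have e1 : W * Aᵀ * B = W * Wᵀ := by rw [Matrix.mul_assoc, hWt]
    have e2 : W * Aᵀ * (A * Wᵀ) = W * Wᵀ := by
      rw [Matrix.mul_assoc, ← Matrix.mul_assoc Aᵀ, hA, Matrix.one_mul]
    rw [e1, e2]; simp
  have hZZ : Zᵀ * Z = 1 - Wᵀ * W := by
    have : Zᵀ * Z = Aᵀ * Z - Wᵀ * (Bᵀ * Z) := by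
      nth_rewrite 1 [hZ]
      rw [transpose_sub, transpose_mul, Matrix.sub_mul, Matrix.mul_assoc]
    rw [this, hBZ, Matrix.mul_zero, sub_zero, hZ, Matrix.mul_sub, hA, ← Matrix.mul_assoc, hWt]
  have hZMB : Zᵀ * M * B = 0 := by
    have this : Zᵀ * B = 0 := by
      have := congrArg transpose hBZ
      simpa using this
    calc Zᵀ * M * B = Zᵀ * (B * Bᵀ * (M * B)) := by rw [← hfo, Matrix.mul_assoc]
      _ = (Zᵀ * B) * (Bᵀ * (M * B)) := by simp only [Matrix.mul_assoc]
      _ = 0 := by rw [this, Matrix.zero_mul]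
  have hBMZ : Bᵀ * M * Z = 0 := by
    have := congrArg transpose hZMB
    simpa [hM, Matrix.mul_assoc] using this
  have hAeq : A = B * W + Z := by rw [hZ]; abel
  have hAMA : Aᵀ * M * A = Wᵀ * H * W + Zᵀ * M * Z := by
    have e : Aᵀ * M * A = Wᵀ * (Bᵀ * M * B) * W + Wᵀ * (Bᵀ * M * Z) + (Zᵀ * M * B) * W
        + Zᵀ * M * Z := by
      conv_lhs => rw [hAeq]
      simp only [transpose_add, transpose_mul, Matrix.add_mul, Matrix.mul_add, Matrix.mul_assoc]
      abel
    rw [e, hBMZ, hZMB]; simp [hH]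
  have hcard : ((1 : Matrix (Fin r) (Fin r) ℝ)).trace = r := by simp
  have hfW : froSq W = (Wᵀ * W).trace := froSq_eq_trace W
  have hfW' : froSq W = (W * Wᵀ).trace := by rw [hfW, Matrix.trace_mul_comm]
  have hZle : (Zᵀ * M * Z).trace ≤ τ2 * (r - froSq W) := by
    have : (r : ℝ) - froSq W = froSq Z := by
      rw [froSq_eq_trace Z, hZZ, Matrix.trace_sub, hcard, hfW]
    rw [this, trace_qf, froSq_cols, Finset.mul_sum]
    refine Finset.sum_le_sum fun j _ => h2 _ ?_
    funext l
    have := congrFun (congrFun hBZ l) j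
    rw [mul_apply] at this
    simpa [mulVec, dotProduct] using this
  have hYge : τ1 * (r - froSq W) ≤ (Y * H * Yᵀ).trace := by
    have : (r : ℝ) - froSq W = froSq Yᵀ := by
      rw [froSq_transpose, froSq_eq_trace Y, hYY, Matrix.trace_sub, hcard, hfW']
    have e := trace_qf H Yᵀ
    rw [transpose_transpose] at e
    rw [this, e, froSq_cols, Finset.mul_sum]
    refine Finset.sum_le_sum fun j _ => (h1 _).trans (le_of_eq ?_)
    rw [hH, ← Matrix.mulVec_mulVec, ← Matrix.mulVec_mulVec, Matrix.dotProduct_mulVec _ Bᵀ,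
      Matrix.vecMul_transpose]
  have hWH : (Wᵀ * H * W).trace = H.trace - (Y * H * Yᵀ).trace := by
    have e1 : (Wᵀ * H * W).trace = (H * (W * Wᵀ)).trace := by
      rw [Matrix.mul_assoc, Matrix.trace_mul_comm, Matrix.mul_assoc]
    have e2 : (Y * H * Yᵀ).trace = (H * (Yᵀ * Y)).trace := by
      rw [Matrix.mul_assoc, Matrix.trace_mul_comm, Matrix.mul_assoc]
    rw [e1, e2, hYY, Matrix.mul_sub, Matrix.mul_one, Matrix.trace_sub]; ring
  rw [hAMA, Matrix.trace_add, hWH]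
  linarith

theorem first_order {m r : ℕ} {κ : Type*} [Fintype κ] (G : Matrix (Fin m) κ ℝ)
    (B : Matrix (Fin m) (Fin r) ℝ) (hB : Bᵀ * B = 1)
    (hmax : ∀ C : Matrix (Fin m) (Fin r) ℝ, Cᵀ * C = 1 → froSq (Cᵀ * G) ≤ froSq (Bᵀ * G)) :
    G * Gᵀ * B = B * Bᵀ * (G * Gᵀ * B) := by
  set M := G * Gᵀ with hMdef
  have hMt : Mᵀ = M := by simp [hMdef]
  have hpsd : ∀ v : Fin m → ℝ, 0 ≤ v ⬝ᵥ (M *ᵥ v) := by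
    intro v
    rw [hMdef, ← Matrix.mulVec_mulVec, Matrix.dotProduct_mulVec, ← Matrix.mulVec_transpose]
    exact dps_nonneg _
  -- Householder variation
  have hv : ∀ v : Fin m → ℝ, 0 ≤ v ⬝ᵥ (M *ᵥ (B *ᵥ (Bᵀ *ᵥ v))) := by
    intro v
    by_cases hv0 : v ⬝ᵥ v = 0
    · rw [dotProduct_self_eq_zero] at hv0
      simp [hv0]
    have hvpos : 0 < v ⬝ᵥ v := lt_of_le_of_ne (dps_nonneg _) (Ne.symm hv0)
    set a := 2 / (v ⬝ᵥ v) with ha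
    set x := Bᵀ *ᵥ v with hx
    set C := B - a • vecMulVec v x with hC
    have hCC : Cᵀ * C = 1 := by
      have e1 : Bᵀ * vecMulVec v x = vecMulVec x x := by rw [Matrix.mul_vecMulVec]
      have e2 : vecMulVec x v * B = vecMulVec x x := by
        rw [Matrix.vecMulVec_mul, ← Matrix.mulVec_transpose]
      have e3 : vecMulVec x v * vecMulVec v x = (v ⬝ᵥ v) • vecMulVec x x := by
        rw [Matrix.vecMulVec_mul_vecMulVec]
        ext i j; simp [vecMulVec_apply]; ring
      rw [hC, transpose_sub, transpose_smul, transpose_vecMulVec, Matrix.sub_mul, Matrix.mul_sub,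
        Matrix.mul_sub, hB, Matrix.mul_smul, Matrix.smul_mul, Matrix.smul_mul, Matrix.mul_smul,
        e1, e2, e3, smul_smul, smul_smul]
      have : a * a * (v ⬝ᵥ v) = a + a := by rw [ha]; field_simp; ring
      rw [this, add_smul]; abel
    have h1 := hmax C hCC
    rw [froSq_tm, froSq_tm, ← hMdef] at h1
    have e4 : (Cᵀ * M * C).trace = (Bᵀ * M * B).trace - 2 * a * (v ⬝ᵥ (M *ᵥ (B *ᵥ x)))
        + a ^ 2 * ((x ⬝ᵥ x) * (v ⬝ᵥ (M *ᵥ v))) := by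
      have f1 : (Bᵀ * M * vecMulVec v x).trace = v ⬝ᵥ (M *ᵥ (B *ᵥ x)) := by
        rw [Matrix.mul_vecMulVec, trace_vecMulVec, ← Matrix.mulVec_mulVec,
          dotProduct_comm, Matrix.dotProduct_mulVec x, Matrix.vecMul_transpose,
          Matrix.dotProduct_mulVec v, ← Matrix.mulVec_transpose, hMt, dotProduct_comm]
      have f2 : (vecMulVec x v * M * B).trace = v ⬝ᵥ (M *ᵥ (B *ᵥ x)) := by
        rw [← f1, ← trace_transpose]
        simp [hMt, Matrix.mul_assoc, transpose_vecMulVec]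
      have f3 : (vecMulVec x v * M * vecMulVec v x).trace = (x ⬝ᵥ x) * (v ⬝ᵥ (M *ᵥ v)) := by
        rw [Matrix.mul_assoc, Matrix.mul_vecMulVec, Matrix.vecMulVec_mul_vecMulVec]
        rw [trace_vecMulVec]
        simp
        ring
      rw [hC, transpose_sub, transpose_smul, transpose_vecMulVec]
      simp only [Matrix.sub_mul, Matrix.mul_sub, Matrix.smul_mul, Matrix.mul_smul, trace_sub,
        trace_smul, smul_eq_mul, f1, f2, f3]
      ring
    rw [e4] at h1
    have hapos : 0 < a := by positivity
    have h5 : 0 ≤ a ^ 2 * ((x ⬝ᵥ x) * (v ⬝ᵥ (M *ᵥ v))) :=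
      mul_nonneg (by positivity) (mul_nonneg (dps_nonneg _) (hpsd v))
    have h6 : 0 ≤ a * (v ⬝ᵥ (M *ᵥ (B *ᵥ x))) := by nlinarith
    exact nonneg_of_mul_nonneg_right h6 hapos
  set R := M * B - B * Bᵀ * (M * B) with hR
  have hBR : Bᵀ * R = 0 := by
    rw [hR, Matrix.mul_sub, Matrix.mul_assoc B, ← Matrix.mul_assoc Bᵀ B, hB, Matrix.one_mul, sub_self]
  have hRMB : Rᵀ * (M * B) = Rᵀ * R := by
    have : Rᵀ * B = 0 := by
      have := congrArg transpose hBR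
      simpa using this
    nth_rewrite 3 [hR]
    rw [Matrix.mul_sub, Matrix.mul_assoc B, ← Matrix.mul_assoc Rᵀ B, this]; simp
  have hRz : R = 0 := by
    have hcol : ∀ j, (fun i => R i j) ⬝ᵥ (fun i => R i j) = 0 := by
      intro j
      set u : Fin m → ℝ := fun i => R i j with hu
      set b : Fin m → ℝ := fun i => B i j with hb
      have hBu : Bᵀ *ᵥ u = 0 := by
        funext l
        have := congrFun (congrFun hBR l) j
        rw [mul_apply] at this
        simpa [mulVec, dotProduct, hu] using this
      have hBb : B *ᵥ (Bᵀ *ᵥ b) = b := by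
        have : B * (Bᵀ * B) = B := by rw [hB, Matrix.mul_one]
        funext i
        have := congrFun (congrFun this i) j
        simpa [mul_apply, mulVec, dotProduct, hb] using this
      have huMb : u ⬝ᵥ (M *ᵥ b) = u ⬝ᵥ u := by
        have := congrFun (congrFun hRMB j) j
        rw [mul_apply, mul_apply] at this
        simpa [mul_apply, mulVec, dotProduct, hb, hu] using this
      by_contra hne
      have hpos : 0 < u ⬝ᵥ u := lt_of_le_of_ne (dps_nonneg _) (Ne.symm hne)
      have key : ∀ t : ℝ, 0 ≤ b ⬝ᵥ (M *ᵥ b) + t * (u ⬝ᵥ u) := by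
        intro t
        have := hv (b + t • u)
        rw [mulVec_add, mulVec_smul, hBu, smul_zero, add_zero, hBb, add_dotProduct,
          smul_dotProduct, huMb] at this
        exact this
      have := key (-(b ⬝ᵥ (M *ᵥ b) + 1) / (u ⬝ᵥ u))
      rw [div_mul_cancel₀ _ hne] at this
      linarith
    ext i j
    have := dotProduct_self_eq_zero.1 (hcol j)
    exact congrFun this i
  exact sub_eq_zero.1 hRz

end Block



section BlockB

theorem stiefel_res {m r : ℕ} (B : Matrix (Fin m) (Fin r) ℝ) (hB : Bᵀ * B = 1) (v : Fin m → ℝ) :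
    (v - B *ᵥ (Bᵀ *ᵥ v)) ⬝ᵥ (v - B *ᵥ (Bᵀ *ᵥ v)) = v ⬝ᵥ v - (Bᵀ *ᵥ v) ⬝ᵥ (Bᵀ *ᵥ v) := by
  have h1 : v ⬝ᵥ (B *ᵥ (Bᵀ *ᵥ v)) = (Bᵀ *ᵥ v) ⬝ᵥ (Bᵀ *ᵥ v) := by
    rw [Matrix.dotProduct_mulVec, ← Matrix.mulVec_transpose]
  have h2 : (B *ᵥ (Bᵀ *ᵥ v)) ⬝ᵥ (B *ᵥ (Bᵀ *ᵥ v)) = (Bᵀ *ᵥ v) ⬝ᵥ (Bᵀ *ᵥ v) := by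
    rw [Matrix.dotProduct_mulVec, ← Matrix.mulVec_transpose, Matrix.mulVec_mulVec, hB,
      Matrix.one_mulVec]
  rw [sub_dotProduct, dotProduct_sub, dotProduct_sub, h2, h1, dotProduct_comm (B *ᵥ (Bᵀ *ᵥ v)) v, h1]
  ring

theorem stiefel_norm {m r : ℕ} (B : Matrix (Fin m) (Fin r) ℝ) (hB : Bᵀ * B = 1) (x : Fin r → ℝ) :
    (B *ᵥ x) ⬝ᵥ (B *ᵥ x) = x ⬝ᵥ x := by
  rw [Matrix.dotProduct_mulVec, ← Matrix.mulVec_transpose, Matrix.mulVec_mulVec, hB,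
      Matrix.one_mulVec]

theorem bessel {m r : ℕ} (B : Matrix (Fin m) (Fin r) ℝ) (hB : Bᵀ * B = 1) (v : Fin m → ℝ) :
    (Bᵀ *ᵥ v) ⬝ᵥ (Bᵀ *ᵥ v) ≤ v ⬝ᵥ v := by
  have := dps_nonneg (v - B *ᵥ (Bᵀ *ᵥ v))
  rw [stiefel_res B hB] at this
  linarith

theorem cs_dot {ι : Type*} [Fintype ι] (u v : ι → ℝ) : (u ⬝ᵥ v) ^ 2 ≤ (u ⬝ᵥ u) * (v ⬝ᵥ v) := by
  have := Finset.sum_mul_sq_le_sq_mul_sq Finset.univ u v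
  simpa [dotProduct, pow_two] using this

theorem froSq_stiefel {m r : ℕ} (A : Matrix (Fin m) (Fin r) ℝ) (hA : Aᵀ * A = 1) : froSq A = r := by
  rw [froSq_eq_trace, hA]; simp

theorem overlap_le {m r : ℕ} (A B : Matrix (Fin m) (Fin r) ℝ) (hA : Aᵀ * A = 1) (hB : Bᵀ * B = 1) :
    froSq (Bᵀ * A) ≤ r := by
  rw [← froSq_stiefel A hA, froSq_cols, froSq_cols]
  exact Finset.sum_le_sum fun j _ => bessel B hB (fun i => A i j)

theorem qf_small {m : ℕ} (E : Matrix (Fin m) (Fin m) ℝ) (δ : ℝ) (hE : ∀ i j, |E i j| ≤ δ)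
    (v : Fin m → ℝ) : |v ⬝ᵥ (E *ᵥ v)| ≤ δ * m * (v ⬝ᵥ v) := by
  have h1 : |v ⬝ᵥ (E *ᵥ v)| ≤ ∑ i, ∑ j, δ * ((v i ^ 2 + v j ^ 2) / 2) := by
    simp only [dotProduct, mulVec, Finset.mul_sum]
    refine (Finset.abs_sum_le_sum_abs _ _).trans (Finset.sum_le_sum fun i _ => ?_)
    refine (Finset.abs_sum_le_sum_abs _ _).trans (Finset.sum_le_sum fun j _ => ?_)
    rw [abs_mul, abs_mul]
    have h0 : 0 ≤ |v i| * |v j| := by positivity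
    have h2 : |v i| * |v j| ≤ (v i ^ 2 + v j ^ 2) / 2 := by
      rw [← sq_abs (v i), ← sq_abs (v j)]; nlinarith [sq_nonneg (|v i| - |v j|)]
    have h3 := hE i j
    have h4 := abs_nonneg (E i j)
    calc |v i| * (|E i j| * |v j|) = |E i j| * (|v i| * |v j|) := by ring
      _ ≤ δ * ((v i ^ 2 + v j ^ 2) / 2) := mul_le_mul h3 h2 h0 (h4.trans h3)
  refine h1.trans (le_of_eq ?_)
  have h5 : v ⬝ᵥ v = ∑ i, v i ^ 2 := by simp [dotProduct, pow_two]
  rw [h5]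
  simp only [← Finset.mul_sum, ← Finset.sum_div, Finset.sum_add_distrib, Finset.sum_const,
    Finset.card_univ, Fintype.card_fin, nsmul_eq_mul]
  ring

theorem qf_diag {m : ℕ} (μ : Fin m → ℝ) (v : Fin m → ℝ) :
    v ⬝ᵥ ((diagonal μ) *ᵥ v) = ∑ i, μ i * v i ^ 2 := by
  simp only [dotProduct, mulVec_diagonal]
  exact Finset.sum_congr rfl fun i _ => by ring

theorem lemD {m r : ℕ} {κ : Type*} [Fintype κ] (G : Matrix (Fin m) κ ℝ) (μ : Fin m → ℝ)
    (S : Finset (Fin m)) (hS : S.card = r) (τ g Λ δ : ℝ) (hg : 0 < g) (hτg : 0 ≤ τ - g)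
    (h1 : ∀ i ∈ S, τ ≤ μ i) (h2 : ∀ i ∉ S, μ i ≤ τ - g) (h0 : ∀ i, 0 ≤ μ i) (hΛ : ∀ i, μ i ≤ Λ)
    (hΛ0 : 0 ≤ Λ) (hE : ∀ i j, |(G * Gᵀ - diagonal μ) i j| ≤ δ)
    (hδ : δ * ((τ + Λ) * (2 * m * r) / g + 2 * m) ≤ g / 2)
    (A B : Matrix (Fin m) (Fin r) ℝ) (hA : Aᵀ * A = 1) (hB : Bᵀ * B = 1)
    (hmax : ∀ C : Matrix (Fin m) (Fin r) ℝ, Cᵀ * C = 1 → froSq (Cᵀ * G) ≤ froSq (Bᵀ * G)) :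
    g / 2 * (r - froSq (Bᵀ * A)) ≤ froSq (Bᵀ * G) - froSq (Aᵀ * G) := by
  classical
  have hfo := first_order G B hB hmax
  set E := G * Gᵀ - diagonal μ with hEdef
  set M := G * Gᵀ with hMdef
  have hMt : Mᵀ = M := by simp [hMdef]
  have hME : M = diagonal μ + E := by rw [hEdef]; abel
  have hqf : ∀ v : Fin m → ℝ, v ⬝ᵥ (M *ᵥ v) = ∑ i, μ i * v i ^ 2 + v ⬝ᵥ (E *ᵥ v) := by
    intro v; rw [hME, add_mulVec, dotProduct_add, qf_diag]
  have hsm := qf_small E δ hE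
  -- trace formula
  have htr : ∀ C : Matrix (Fin m) (Fin r) ℝ, Cᵀ * C = 1 →
      |froSq (Cᵀ * G) - ∑ i, μ i * ∑ j, C i j ^ 2| ≤ δ * m * r := by
    intro C hC
    have e1 : froSq (Cᵀ * G) - ∑ i, μ i * ∑ j, C i j ^ 2
        = ∑ j, (fun i => C i j) ⬝ᵥ (E *ᵥ (fun i => C i j)) := by
      rw [froSq_tm, ← hMdef, trace_qf]
      simp only [hqf, Finset.sum_add_distrib, Finset.mul_sum]
      rw [Finset.sum_comm]; ring
    rw [e1]
    refine (Finset.abs_sum_le_sum_abs _ _).trans ?_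
    refine (Finset.sum_le_sum fun j _ => hsm (fun i => C i j)).trans (le_of_eq ?_)
    rw [← Finset.mul_sum, ← froSq_cols, froSq_stiefel C hC]
  set β : Fin m → ℝ := fun i => ∑ j, B i j ^ 2 with hβ
  have hβe : ∀ i, (Bᵀ *ᵥ (Pi.single i 1)) ⬝ᵥ (Bᵀ *ᵥ (Pi.single i 1)) = β i := by
    intro i
    simp [hβ, dotProduct, pow_two]
  have hβ1 : ∀ i, β i ≤ 1 := by
    intro i
    rw [← hβe]
    refine (bessel B hB _).trans (le_of_eq ?_)
    simp
  have hβ0 : ∀ i, 0 ≤ β i := fun i => by simp only [hβ]; positivity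
  have hβs : ∑ i, β i = r := by rw [← froSq_stiefel B hB]; rfl
  set T := ∑ i ∈ Sᶜ, β i with hT
  have hT0 : 0 ≤ T := Finset.sum_nonneg fun i _ => hβ0 i
  have hTS : ∑ i ∈ S, (1 - β i) = T := by
    rw [Finset.sum_sub_distrib, Finset.sum_const, hS, nsmul_eq_mul, mul_one]
    have := Finset.sum_add_sum_compl S β
    rw [hβs] at this
    linarith
  have hstar : g * T ≤ ∑ i ∈ S, μ i - ∑ i, μ i * β i := by
    have a1 : τ * T ≤ ∑ i ∈ S, μ i * (1 - β i) := by
      rw [← hTS, Finset.mul_sum]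
      exact Finset.sum_le_sum fun i hi =>
        mul_le_mul_of_nonneg_right (h1 i hi) (by linarith [hβ1 i])
    have a2 : ∑ i ∈ Sᶜ, μ i * β i ≤ (τ - g) * T := by
      rw [hT, Finset.mul_sum]
      exact Finset.sum_le_sum fun i hi =>
        mul_le_mul_of_nonneg_right (h2 i (Finset.mem_compl.1 hi)) (hβ0 i)
    rw [← Finset.sum_add_sum_compl S]
    have a3 : ∑ i ∈ S, μ i * (1 - β i) = ∑ i ∈ S, μ i - ∑ i ∈ S, μ i * β i := by
      rw [← Finset.sum_sub_distrib]
      exact Finset.sum_congr rfl fun i _ => by ring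
    linarith
  have hTle : g * T ≤ 2 * δ * m * r := by
    set s := S.orderEmbOfFin hS with hs
    set C : Matrix (Fin m) (Fin r) ℝ := fun i j => if i = s j then 1 else 0 with hC
    have hCC : Cᵀ * C = 1 := by
      ext j l
      rw [mul_apply]
      have : ∀ i, Cᵀ j i * C i l = if i = s l then (if s l = s j then 1 else 0) else 0 := by
        intro i
        change (if i = s j then (1 : ℝ) else 0) * (if i = s l then 1 else 0) = _
        by_cases h : i = s l
        · rw [if_pos h, if_pos h, h, mul_one]
        · rw [if_neg h, if_neg h, mul_zero]
      simp only [this, Finset.sum_ite_eq', Finset.mem_univ, if_true, one_apply]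
      by_cases h : j = l
      · simp [h]
      · have : s l ≠ s j := fun h' => h (s.injective h').symm
        simp [h, this]
    have c1 := htr C hCC
    have c2 := htr B hB
    have c3 := hmax C hCC
    have c4 : ∑ i, μ i * ∑ j, C i j ^ 2 = ∑ i ∈ S, μ i := by
      simp only [Finset.mul_sum]
      rw [Finset.sum_comm]
      have : ∀ j, ∑ i, μ i * C i j ^ 2 = μ (s j) := by
        intro j; simp [hC]
      simp only [this]
      rw [← Finset.sum_image (s := Finset.univ) (g := s) (f := μ) (by intro a _ b _ h; exact s.injective h)]
      congr 1
      ext i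
      simp only [Finset.mem_image, Finset.mem_univ, true_and]
      have := Finset.range_orderEmbOfFin S hS
      rw [← Finset.mem_coe, ← this]; rfl
    rw [c4] at c1
    have d1 := (abs_le.1 c1).1
    have d2 := (abs_le.1 c2).2
    have d3 : ∑ i, μ i * ∑ j, B i j ^ 2 = ∑ i, μ i * β i := rfl
    rw [d3] at d2
    linarith
  have hgr := growth M hMt A B hA hB hfo (τ - τ * T - δ * m) (Λ * T + (τ - g) + δ * m) ?_ ?_
  · rw [← froSq_tm, ← froSq_tm] at hgr
    refine le_trans ?_ hgr
    refine mul_le_mul_of_nonneg_right ?_ (sub_nonneg.2 (overlap_le A B hA hB))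
    have hT2 : T ≤ 2 * δ * m * r / g := by rw [le_div_iff₀ hg]; linarith
    have e : (τ + Λ) * T ≤ (τ + Λ) * (2 * δ * m * r / g) :=
      mul_le_mul_of_nonneg_left hT2 (by linarith)
    have e2 : δ * ((τ + Λ) * (2 * m * r) / g + 2 * m) =
      (τ + Λ) * (2 * δ * m * r / g) + 2 * (δ * m) := by ring
    nlinarith
  · intro x
    have b1 := (abs_le.1 (hsm (B *ᵥ x))).1
    rw [stiefel_norm B hB] at b1
    rw [hqf]
    have b2 : ∀ i, (B *ᵥ x) i ^ 2 ≤ β i * (x ⬝ᵥ x) := by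
      intro i
      have := cs_dot (B i) x
      simpa [hβ, dotProduct, mulVec, pow_two] using this
    have b3 : ∑ i ∈ S, (B *ᵥ x) i ^ 2 + ∑ i ∈ Sᶜ, (B *ᵥ x) i ^ 2 = x ⬝ᵥ x := by
      rw [Finset.sum_add_sum_compl, ← stiefel_norm B hB]; simp [dotProduct, pow_two]
    have b4 : ∑ i ∈ Sᶜ, (B *ᵥ x) i ^ 2 ≤ T * (x ⬝ᵥ x) := by
      rw [hT, Finset.sum_mul]; exact Finset.sum_le_sum fun i _ => b2 i
    have b5 : τ * ∑ i ∈ S, (B *ᵥ x) i ^ 2 ≤ ∑ i, μ i * (B *ᵥ x) i ^ 2 := by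
      rw [← Finset.sum_add_sum_compl S, Finset.mul_sum]
      have : 0 ≤ ∑ i ∈ Sᶜ, μ i * (B *ᵥ x) i ^ 2 :=
        Finset.sum_nonneg fun i _ => mul_nonneg (h0 i) (sq_nonneg _)
      have : ∑ i ∈ S, τ * (B *ᵥ x) i ^ 2 ≤ ∑ i ∈ S, μ i * (B *ᵥ x) i ^ 2 :=
        Finset.sum_le_sum fun i hi => mul_le_mul_of_nonneg_right (h1 i hi) (sq_nonneg _)
      linarith
    have hτ : 0 ≤ τ := by linarith
    nlinarith [mul_le_mul_of_nonneg_left b4 hτ]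
  · intro u hu
    have b1 := (abs_le.1 (hsm u)).2
    rw [hqf]
    have b2 : ∀ i, u i ^ 2 ≤ (1 - β i) * (u ⬝ᵥ u) := by
      intro i
      have := cs_dot (Pi.single i 1 - B *ᵥ (Bᵀ *ᵥ Pi.single i 1)) u
      rw [stiefel_res B hB, hβe, sub_dotProduct, dotProduct_comm (B *ᵥ _) u,
        Matrix.dotProduct_mulVec u, ← Matrix.mulVec_transpose, hu] at this
      simpa using this
    have b3 : ∑ i ∈ S, u i ^ 2 + ∑ i ∈ Sᶜ, u i ^ 2 = u ⬝ᵥ u := by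
      rw [Finset.sum_add_sum_compl]; simp [dotProduct, pow_two]
    have b4 : ∑ i ∈ S, u i ^ 2 ≤ T * (u ⬝ᵥ u) := by
      rw [← hTS, Finset.sum_mul]; exact Finset.sum_le_sum fun i _ => b2 i
    have b6 : 0 ≤ ∑ i ∈ S, u i ^ 2 := Finset.sum_nonneg fun i _ => sq_nonneg _
    have b5 : ∑ i, μ i * u i ^ 2 ≤ Λ * ∑ i ∈ S, u i ^ 2 + (τ - g) * ∑ i ∈ Sᶜ, u i ^ 2 := by
      rw [← Finset.sum_add_sum_compl S, Finset.mul_sum, Finset.mul_sum]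
      have : ∑ i ∈ Sᶜ, μ i * u i ^ 2 ≤ ∑ i ∈ Sᶜ, (τ - g) * u i ^ 2 :=
        Finset.sum_le_sum fun i hi =>
          mul_le_mul_of_nonneg_right (h2 i (Finset.mem_compl.1 hi)) (sq_nonneg _)
      have : ∑ i ∈ S, μ i * u i ^ 2 ≤ ∑ i ∈ S, Λ * u i ^ 2 :=
        Finset.sum_le_sum fun i hi => mul_le_mul_of_nonneg_right (hΛ i) (sq_nonneg _)
      linarith
    nlinarith [mul_le_mul_of_nonneg_left b4 hΛ0, mul_nonneg hτg b6]

end BlockB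



section BlockC

theorem list_gap (L : List ℝ) (hs : L.Pairwise (fun a b => b ≤ a)) (r : ℕ) (h1 : 1 ≤ r)
    (hr : r ≤ L.length) (hgap : L.getD r 0 < L.getD (r - 1) 0) :
    L.countP (fun x => decide (L.getD (r - 1) 0 ≤ x)) = r ∧
      ∀ x ∈ L, x < L.getD (r - 1) 0 → x ≤ L.getD r 0 := by
  have hrl : r - 1 < L.length := by omega
  have hτ : L.getD (r - 1) 0 = L[r - 1] := by simp [hrl]
  have hmono : ∀ i j (hi : i < L.length) (hj : j < L.length), i ≤ j → L[j] ≤ L[i] := by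
    intro i j hi hj hij
    rcases hij.eq_or_lt with h | h
    · subst h; exact le_rfl
    · exact List.pairwise_iff_getElem.1 hs i j hi hj h
  have hlow : ∀ i (hi : i < L.length), r ≤ i → L[i] ≤ L.getD r 0 := by
    intro i hi hri
    have hrL : r < L.length := by omega
    have : L.getD r 0 = L[r] := by simp [hrL]
    rw [this]; exact hmono r i hrL hi hri
  have hup : ∀ i (hi : i < L.length), i < r → L.getD (r - 1) 0 ≤ L[i] := by
    intro i hi hri
    rw [hτ]; exact hmono i (r - 1) hi hrl (by omega)
  constructor
  · conv_lhs => rw [← List.take_append_drop r L]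
    rw [List.countP_append]
    have e1 : (L.take r).countP (fun x => decide ((List.take r L ++ List.drop r L).getD (r - 1) 0 ≤ x)) = r := by
      rw [List.countP_eq_length.2]
      · simp [hr]
      · intro a ha
        rw [List.take_append_drop]
        obtain ⟨i, hi, rfl⟩ := List.mem_iff_getElem.1 ha
        simp only [List.length_take] at hi
        rw [List.getElem_take]
        simpa using hup i (by omega) (by omega)
    have e2 : (L.drop r).countP (fun x => decide ((List.take r L ++ List.drop r L).getD (r - 1) 0 ≤ x)) = 0 := by
      rw [List.countP_eq_zero]
      intro a ha
      rw [List.take_append_drop]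
      obtain ⟨i, hi, rfl⟩ := List.mem_iff_getElem.1 ha
      simp only [List.length_drop] at hi
      rw [List.getElem_drop]
      have := hlow (r + i) (by omega) (by omega)
      simp only [decide_eq_true_eq, not_le]
      linarith
    rw [e1, e2, add_zero]
  · intro x hx hxl
    obtain ⟨i, hi, rfl⟩ := List.mem_iff_getElem.1 hx
    by_cases h : i < r
    · exact absurd (hup i hi h) (not_le.2 hxl)
    · exact hlow i hi (by omega)

theorem real_spectral {n : ℕ} (A : Matrix (Fin n) (Fin n) ℝ) (hA : A.IsHermitian) :
    ∃ U : Matrix (Fin n) (Fin n) ℝ, Uᵀ * U = 1 ∧ U * Uᵀ = 1 ∧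
      Uᵀ * A * U = diagonal hA.eigenvalues := by
  refine ⟨hA.eigenvectorUnitary.1, ?_, ?_, ?_⟩
  · have := Unitary.coe_star_mul_self hA.eigenvectorUnitary
    simpa [star_eq_conjTranspose, conjTranspose_eq_transpose_of_trivial] using this
  · have := Unitary.coe_mul_star_self hA.eigenvectorUnitary
    simpa [star_eq_conjTranspose, conjTranspose_eq_transpose_of_trivial] using this
  · have := hA.conjStarAlgAut_star_eigenvectorUnitary
    rw [Unitary.conjStarAlgAut_apply] at this
    simpa [star_eq_conjTranspose, conjTranspose_eq_transpose_of_trivial] using this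

theorem gap_data {m r : ℕ} {κ : Type*} [Fintype κ] (Y : Matrix (Fin m) κ ℝ) (hr : r ≤ m)
    (hgap : sval Y (r + 1) < sval Y r) :
    ∃ (U : Matrix (Fin m) (Fin m) ℝ) (μ : Fin m → ℝ) (S : Finset (Fin m)) (τ g Λ : ℝ),
      Uᵀ * U = 1 ∧ U * Uᵀ = 1 ∧ Uᵀ * (Y * Yᵀ) * U = diagonal μ ∧ S.card = r ∧ 0 < g ∧ 0 ≤ τ - g ∧
      (∀ i ∈ S, τ ≤ μ i) ∧ (∀ i ∉ S, μ i ≤ τ - g) ∧ (∀ i, 0 ≤ μ i) ∧ (∀ i, μ i ≤ Λ) ∧ 0 ≤ Λ := by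
  classical
  have hH := Matrix.isHermitian_mul_conjTranspose_self Y
  set μ := hH.eigenvalues with hμ
  have hμ0 : ∀ i, 0 ≤ μ i := fun i => (Matrix.posSemidef_self_mul_conjTranspose Y).eigenvalues_nonneg i
  have hLperm : ((eigList Y : List ℝ) : Multiset ℝ) = (Finset.univ : Finset (Fin m)).val.map μ := by
    unfold eigList
    rw [Multiset.coe_reverse, Multiset.sort_eq]
  have hpw : (eigList Y).Pairwise (fun a b => b ≤ a) := by
    unfold eigList
    rw [List.pairwise_reverse]
    exact Multiset.pairwise_sort _ _
  have hlen : (eigList Y).length = m := by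
    rw [← Multiset.coe_card, hLperm]; simp
  have hmem : ∀ x, x ∈ eigList Y ↔ ∃ i, μ i = x := by
    intro x
    rw [← Multiset.mem_coe, hLperm]; simp
  have hr1 : 1 ≤ r := by
    rcases Nat.eq_zero_or_pos r with h | h
    · subst h; simp [sval] at hgap
    · exact h
  have hgap' : (eigList Y).getD r 0 < (eigList Y).getD (r - 1) 0 := by
    by_contra h
    exact absurd hgap (not_lt.2 (Real.sqrt_le_sqrt (not_lt.1 h)))
  obtain ⟨hc, hlow⟩ := list_gap (eigList Y) hpw r hr1 (by rw [hlen]; exact hr) hgap'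
  set τ := (eigList Y).getD (r - 1) 0 with hτ
  set ρ := (eigList Y).getD r 0 with hρ
  have hρ0 : 0 ≤ ρ := by
    by_cases h : r < (eigList Y).length
    · have h1 : ρ = (eigList Y)[r] := by rw [hρ]; simp [h]
      obtain ⟨i, hi⟩ := (hmem ρ).1 (h1 ▸ List.getElem_mem h)
      rw [← hi]; exact hμ0 i
    · have h1 : ρ = 0 := by rw [hρ]; simp at h; simp [h]
      rw [h1]
  obtain ⟨U, hU1, hU2, hU3⟩ := real_spectral _ hH
  refine ⟨U, μ, Finset.univ.filter (fun i => τ ≤ μ i), τ, τ - ρ, ∑ i, μ i, hU1, hU2, ?_, ?_, ?_, ?_,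
    ?_, ?_, hμ0, ?_, ?_⟩
  · rw [← hU3, conjTranspose_eq_transpose_of_trivial]
  · rw [← hc, ← Multiset.coe_countP, hLperm, Multiset.countP_map]
    rfl
  · linarith
  · linarith
  · intro i hi; exact (Finset.mem_filter.1 hi).2
  · intro i hi
    have : μ i < τ := by
      by_contra h
      exact hi (Finset.mem_filter.2 ⟨Finset.mem_univ _, not_lt.1 h⟩)
    have := hlow (μ i) ((hmem _).2 ⟨i, rfl⟩) this
    linarith
  · intro i; exact Finset.single_le_sum (fun j _ => hμ0 j) (Finset.mem_univ i)
  · exact Finset.sum_nonneg fun j _ => hμ0 j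

theorem procrustes {m r : ℕ} (A B : Matrix (Fin m) (Fin r) ℝ) (hA : Aᵀ * A = 1) (hB : Bᵀ * B = 1)
    (h : r - froSq (Bᵀ * A) < 1) :
    ∃ O : Matrix (Fin r) (Fin r) ℝ, Oᵀ * O = 1 ∧ froSq (B * O - A) ≤ 2 * (r - froSq (Bᵀ * A)) := by
  set W := Bᵀ * A with hW
  have hH : (Wᵀ * W).IsHermitian := by
    have := Matrix.isHermitian_conjTranspose_mul_self W
    rwa [conjTranspose_eq_transpose_of_trivial] at this
  obtain ⟨U, hU1, hU2, hU3⟩ := real_spectral _ hH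
  set l := hH.eigenvalues with hl
  have hV : (W * U)ᵀ * (W * U) = diagonal l := by
    rw [← hU3, transpose_mul]; simp only [Matrix.mul_assoc]
  have hWW : Wᵀ * W = U * diagonal l * Uᵀ := by
    rw [← hU3]
    calc Wᵀ * W = (U * Uᵀ) * (Wᵀ * W) * (U * Uᵀ) := by rw [hU2]; simp
      _ = _ := by simp only [Matrix.mul_assoc]
  have hlj : ∀ j, l j = (fun i => (W * U) i j) ⬝ᵥ (fun i => (W * U) i j) := by
    intro j
    have := congrFun (congrFun hV j) j
    rw [mul_apply, diagonal_apply_eq] at this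
    rw [← this]; rfl
  have hl0 : ∀ j, 0 ≤ l j := fun j => by rw [hlj]; exact dps_nonneg _
  have hAU : (A * U)ᵀ * (A * U) = 1 := by
    rw [transpose_mul, Matrix.mul_assoc, ← Matrix.mul_assoc Aᵀ, hA, Matrix.one_mul, hU1]
  have hl1 : ∀ j, l j ≤ 1 := by
    intro j
    have e1 : (fun i => (W * U) i j) = Bᵀ *ᵥ (fun i => (A * U) i j) := by
      funext i
      rw [hW, Matrix.mul_assoc, mul_apply]; rfl
    rw [hlj, e1]
    refine (bessel B hB _).trans (le_of_eq ?_)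
    have := congrFun (congrFun hAU j) j
    rw [mul_apply, one_apply_eq] at this
    rw [← this]; rfl
  have hsum : froSq W = ∑ j, l j := by
    rw [froSq_eq_trace, hWW, Matrix.trace_mul_comm, ← Matrix.mul_assoc, hU1, Matrix.one_mul,
      trace_diagonal]
  have hsum' : (r : ℝ) - froSq W = ∑ j, (1 - l j) := by
    rw [hsum, Finset.sum_sub_distrib]; simp
  have hlpos : ∀ j, 0 < l j := by
    intro j
    have : 1 - l j ≤ ∑ j, (1 - l j) :=
      Finset.single_le_sum (f := fun j => 1 - l j) (fun i _ => sub_nonneg.2 (hl1 i))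
        (Finset.mem_univ j)
    linarith
  set q : Fin r → ℝ := fun j => (Real.sqrt (l j))⁻¹ with hq
  set O := W * U * diagonal q * Uᵀ with hO
  have hOO : Oᵀ * O = 1 := by
    have : Oᵀ * O = U * (diagonal q * ((W * U)ᵀ * (W * U)) * diagonal q) * Uᵀ := by
      rw [hO]
      simp only [transpose_mul, transpose_transpose, diagonal_transpose, Matrix.mul_assoc]
    rw [this, hV, diagonal_mul_diagonal, diagonal_mul_diagonal]
    have e : (diagonal fun i => q i * l i * q i) = (1 : Matrix (Fin r) (Fin r) ℝ) := by
      rw [← diagonal_one]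
      congr 1
      funext i
      have h1 := Real.sqrt_pos.2 (hlpos i)
      have h2 := Real.mul_self_sqrt (hl0 i)
      simp only [hq]
      nth_rewrite 2 [← h2]
      field_simp
    rw [e, Matrix.mul_one, hU2]
  have htr : (Oᵀ * W).trace = ∑ j, Real.sqrt (l j) := by
    have : Oᵀ * W = U * diagonal q * (Uᵀ * (Wᵀ * W)) := by
      rw [hO]
      simp only [transpose_mul, transpose_transpose, diagonal_transpose, Matrix.mul_assoc]
    rw [this, hWW, Matrix.mul_assoc U (diagonal l), ← Matrix.mul_assoc Uᵀ, hU1, Matrix.one_mul,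
      Matrix.mul_assoc, Matrix.trace_mul_comm, ← Matrix.mul_assoc, Matrix.mul_assoc _ Uᵀ U, hU1,
      Matrix.mul_one, diagonal_mul_diagonal, trace_diagonal]
    refine Finset.sum_congr rfl fun i _ => ?_
    have h1 := Real.sqrt_pos.2 (hlpos i)
    have h2 := Real.mul_self_sqrt (hl0 i)
    simp only [hq]
    nth_rewrite 2 [← h2]
    field_simp
  refine ⟨O, hOO, ?_⟩
  have e1 : froSq (B * O - A) = 2 * r - 2 * (Oᵀ * W).trace := by
    have x1 : Oᵀ * Bᵀ * (B * O) = 1 := by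
      rw [Matrix.mul_assoc, ← Matrix.mul_assoc Bᵀ, hB, Matrix.one_mul, hOO]
    have x2 : (Aᵀ * (B * O)).trace = (Oᵀ * W).trace := by
      rw [← trace_transpose, hW]; simp [Matrix.mul_assoc]
    rw [froSq_eq_trace, transpose_sub, transpose_mul, Matrix.sub_mul, Matrix.mul_sub,
      Matrix.mul_sub, x1, hA, trace_sub, trace_sub, trace_sub, x2, Matrix.mul_assoc, ← hW]
    simp only [trace_one, Fintype.card_fin]
    ring
  rw [e1, htr, hsum]
  have : ∑ j, l j ≤ ∑ j, Real.sqrt (l j) := by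
    refine Finset.sum_le_sum fun j _ => ?_
    exact Real.le_sqrt_of_sq_le (by nlinarith [hl0 j, hl1 j])
  linarith

theorem froSq_orth_left {m r : ℕ} {κ : Type*} [Fintype κ] (O : Matrix (Fin r) (Fin r) ℝ)
    (hO : Oᵀ * O = 1) (B : Matrix (Fin m) (Fin r) ℝ) (G : Matrix (Fin m) κ ℝ) :
    froSq ((B * O)ᵀ * G) = froSq (Bᵀ * G) := by
  have hO' : O * Oᵀ = 1 := mul_eq_one_comm.1 hO
  rw [froSq_tm, froSq_tm, transpose_mul]
  have : Oᵀ * Bᵀ * (G * Gᵀ) * (B * O) = Oᵀ * ((Bᵀ * (G * Gᵀ) * B) * O) := by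
    simp only [Matrix.mul_assoc]
  rw [this, Matrix.trace_mul_comm, Matrix.mul_assoc, hO', Matrix.mul_one]

theorem block_growth {m r : ℕ} {κ : Type*} [Fintype κ] (Gbar : Matrix (Fin m) κ ℝ) (hr : r ≤ m)
    (hgap : sval Gbar (r + 1) < sval Gbar r) :
    ∃ C : ℝ, 0 < C ∧ ∀ᶠ G in nhds Gbar, ∀ A B : Matrix (Fin m) (Fin r) ℝ, Aᵀ * A = 1 → Bᵀ * B = 1 →
      (∀ D : Matrix (Fin m) (Fin r) ℝ, Dᵀ * D = 1 → froSq (Dᵀ * G) ≤ froSq (Bᵀ * G)) →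
      C * (froSq (Bᵀ * G) - froSq (Aᵀ * G)) < 1 →
      ∃ B' : Matrix (Fin m) (Fin r) ℝ, B'ᵀ * B' = 1 ∧ froSq (B'ᵀ * G) = froSq (Bᵀ * G) ∧
        froSq (B' - A) ≤ C * (froSq (Bᵀ * G) - froSq (Aᵀ * G)) := by
  obtain ⟨U, μ, S, τ, g, Λ, hU1, hU2, hU3, hS, hg, hτg, h1, h2, h0, hΛ, hΛ0⟩ := gap_data Gbar hr hgap
  set K := (τ + Λ) * (2 * m * r) / g + 2 * m with hK
  have hK0 : 0 ≤ K := by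
    have : 0 ≤ τ + Λ := by linarith
    positivity
  set δ := g / (2 * (K + 1)) with hδ
  have hδ0 : 0 < δ := by positivity
  have hδK : δ * K ≤ g / 2 := by
    rw [hδ, div_mul_eq_mul_div, div_le_div_iff₀ (by positivity) (by positivity)]
    nlinarith
  refine ⟨4 / g, by positivity, ?_⟩
  have hev : ∀ᶠ G in nhds Gbar, ∀ i j, |((Uᵀ * G) * (Uᵀ * G)ᵀ - diagonal μ) i j| ≤ δ := by
    rw [eventually_all]
    intro i
    rw [eventually_all]
    intro j
    have hcont : Continuous fun G : Matrix (Fin m) κ ℝ =>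
        |((Uᵀ * G) * (Uᵀ * G)ᵀ - diagonal μ) i j| := by
      apply Continuous.abs
      apply Continuous.matrix_elem
      fun_prop
    have hz : |((Uᵀ * Gbar) * (Uᵀ * Gbar)ᵀ - diagonal μ) i j| = 0 := by
      have : (Uᵀ * Gbar) * (Uᵀ * Gbar)ᵀ = diagonal μ := by
        rw [← hU3]; simp [Matrix.mul_assoc]
      rw [this]; simp
    have := hcont.tendsto Gbar
    rw [hz] at this
    exact (this.eventually (gt_mem_nhds hδ0)).mono fun G hG => le_of_lt hG
  filter_upwards [hev] with G hG A B hA hB hmax hsmall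
  have hUG : ∀ D : Matrix (Fin m) (Fin r) ℝ, (Uᵀ * D)ᵀ * (Uᵀ * G) = Dᵀ * G := by
    intro D
    rw [transpose_mul, transpose_transpose, Matrix.mul_assoc, ← Matrix.mul_assoc U, hU2,
      Matrix.one_mul]
  have hUD : ∀ D E : Matrix (Fin m) (Fin r) ℝ, (Uᵀ * D)ᵀ * (Uᵀ * E) = Dᵀ * E := by
    intro D E
    rw [transpose_mul, transpose_transpose, Matrix.mul_assoc, ← Matrix.mul_assoc U, hU2,
      Matrix.one_mul]
  have key := lemD (Uᵀ * G) μ S hS τ g Λ δ hg hτg h1 h2 h0 hΛ hΛ0 hG hδK (Uᵀ * A) (Uᵀ * B)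
    (by rw [hUD, hA]) (by rw [hUD, hB]) (by
      intro C hC
      have e : C = Uᵀ * (U * C) := by rw [← Matrix.mul_assoc, hU1, Matrix.one_mul]
      rw [hUG B, e, hUG]
      apply hmax
      rw [transpose_mul, Matrix.mul_assoc, ← Matrix.mul_assoc Uᵀ, hU1, Matrix.one_mul, hC])
  rw [hUG, hUG, hUD] at key
  set d := froSq (Bᵀ * G) - froSq (Aᵀ * G) with hd
  have hkey : 2 * (r - froSq (Bᵀ * A)) ≤ 4 / g * d := by
    rw [div_mul_eq_mul_div, le_div_iff₀ hg]; nlinarith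
  have hnn := sub_nonneg.2 (overlap_le A B hA hB)
  obtain ⟨O, hO, hOle⟩ := procrustes A B hA hB (by linarith)
  refine ⟨B * O, ?_, froSq_orth_left O hO B G, hOle.trans hkey⟩
  rw [transpose_mul, Matrix.mul_assoc, ← Matrix.mul_assoc Bᵀ, hB, Matrix.one_mul, hO]

end BlockC



section Final

/-- Abstract Kurdyka–Łojasiewicz convergence argument. -/
theorem kl_conv {E : Type*} [PseudoMetricSpace E] (a : ℕ → E) (abar : E) (h : ℕ → ℝ)
    (h0 : ∀ k, 0 ≤ h k) (hanti : Antitone h) (hlim : Tendsto h atTop (nhds 0))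
    (ε C θ : ℝ) (hε : 0 < ε) (hC : 0 < C) (hθ0 : 0 < θ) (hθ1 : θ < 1)
    (hstep : ∀ k, dist (a k) abar < ε → h k < ε →
      dist (a (k + 1)) (a k) ^ 2 ≤ C * (h k - h (k + 1)) ∧
      h k ^ θ ≤ C * dist (a (k + 1)) (a k))
    (φ : ℕ → ℕ) (hφ : StrictMono φ) (hsub : Tendsto (fun k => a (φ k)) atTop (nhds abar)) :
    Tendsto a atTop (nhds abar) := by
  set s := 1 - θ with hs
  have hs0 : 0 < s := by linarith
  have hs1 : s ≤ 1 := by linarith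
  set D := C ^ 2 / s with hD
  have hD0 : 0 < D := by positivity
  have hdec : ∀ k, dist (a k) abar < ε → h k < ε →
      dist (a (k + 1)) (a k) ≤ D * (h k ^ s - h (k + 1) ^ s) := by
    intro k hk1 hk2
    obtain ⟨e1, e2⟩ := hstep k hk1 hk2
    set d := dist (a (k + 1)) (a k) with hd
    have hd0 : 0 ≤ d := dist_nonneg
    have hle : h (k + 1) ≤ h k := hanti (Nat.le_succ k)
    rcases (h0 k).eq_or_lt with hz | hpos
    · have hz' : h (k + 1) = 0 := le_antisymm (by linarith) (h0 _)
      rw [← hz, hz'] at e1 ⊢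
      have : d = 0 := by nlinarith
      rw [this]; simp
    · have hb : h (k + 1) ^ s ≤ h k ^ s + s * (h (k + 1) - h k) * h k ^ (s - 1) := by
        have hb0 := rpow_one_add_le_one_add_mul_self (s := h (k + 1) / h k - 1) (p := s)
          (by have := div_nonneg (h0 (k + 1)) (h0 k); linarith) hs0.le hs1
        have e : 1 + (h (k + 1) / h k - 1) = h (k + 1) / h k := by ring
        rw [e, Real.div_rpow (h0 _) (h0 _), div_le_iff₀ (Real.rpow_pos_of_pos hpos s)] at hb0
        refine hb0.trans (le_of_eq ?_)
        rw [Real.rpow_sub_one hpos.ne']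
        field_simp
      have hp : 0 < h k ^ θ := Real.rpow_pos_of_pos hpos θ
      have hs' : h k ^ (s - 1) = (h k ^ θ)⁻¹ := by
        rw [← Real.rpow_neg (h0 k)]; congr 1; rw [hs]; ring
      rw [hs'] at hb
      set q := h k ^ θ with hq
      have hb2 : s * (h k - h (k + 1)) ≤ (h k ^ s - h (k + 1) ^ s) * q := by
        have := mul_le_mul_of_nonneg_right hb hp.le
        have e : (h k ^ s + s * (h (k + 1) - h k) * q⁻¹) * q
            = h k ^ s * q + s * (h (k + 1) - h k) := by field_simp
        rw [e] at this
        linarith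
      have hdpos : 0 < d := by
        by_contra hn
        have : d = 0 := le_antisymm (not_lt.1 hn) hd0
        rw [this] at e2; linarith
      set P := h k ^ s - h (k + 1) ^ s with hP
      have hP0 : 0 ≤ P := sub_nonneg.2 (Real.rpow_le_rpow (h0 _) hle hs0.le)
      have h3 : s * d ^ 2 ≤ C ^ 2 * P * d := by
        calc s * d ^ 2 ≤ s * (C * (h k - h (k + 1))) := mul_le_mul_of_nonneg_left e1 hs0.le
          _ = C * (s * (h k - h (k + 1))) := by ring
          _ ≤ C * (P * q) := mul_le_mul_of_nonneg_left hb2 hC.le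
          _ ≤ C * (P * (C * d)) := by gcongr
          _ = C ^ 2 * P * d := by ring
      have h4 : s * d ≤ C ^ 2 * P := by
        have : (s * d) * d ≤ (C ^ 2 * P) * d := by nlinarith
        exact le_of_mul_le_mul_right this hdpos
      rw [hD, div_mul_eq_mul_div, le_div_iff₀ hs0]
      linarith
  rw [Metric.tendsto_atTop]
  intro ε' hε'
  have hpow : Tendsto (fun k => D * h k ^ s) atTop (nhds 0) := by
    have := (hlim.rpow_const (p := s) (Or.inr hs0.le)).const_mul D
    rwa [Real.zero_rpow hs0.ne', mul_zero] at this
  set e := min ε ε' with he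
  have he0 : 0 < e := lt_min hε hε'
  have hev1 : ∀ᶠ k in atTop, dist (a (φ k)) abar < e / 2 :=
    (Metric.tendsto_nhds.1 hsub) _ (by positivity)
  have hev2 : ∀ᶠ k in atTop, D * h (φ k) ^ s < e / 2 :=
    (hpow.comp hφ.tendsto_atTop).eventually (gt_mem_nhds (by positivity))
  have hev3 : ∀ᶠ k in atTop, h (φ k) < ε :=
    (hlim.comp hφ.tendsto_atTop).eventually (gt_mem_nhds hε)
  obtain ⟨j, hj1, hj2, hj3⟩ := (hev1.and (hev2.and hev3)).exists
  set K := φ j with hK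
  have hind : ∀ i, dist (a (K + i)) abar ≤ dist (a K) abar + D * (h K ^ s - h (K + i) ^ s) := by
    intro i
    induction i with
    | zero => simp
    | succ i ih =>
      have hpos : 0 ≤ D * h (K + i) ^ s := mul_nonneg hD0.le (Real.rpow_nonneg (h0 _) _)
      have hlt : dist (a (K + i)) abar < ε := by
        have : e ≤ ε := min_le_left _ _
        nlinarith
      have hh : h (K + i) < ε := (hanti (Nat.le_add_right K i)).trans_lt hj3
      have := hdec (K + i) hlt hh
      have ht := dist_triangle (a (K + i + 1)) (a (K + i)) abar
      rw [← add_assoc]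
      linarith
  refine ⟨K, fun n hn => ?_⟩
  obtain ⟨i, rfl⟩ := Nat.exists_eq_add_of_le hn
  have := hind i
  have hpos : 0 ≤ D * h (K + i) ^ s := mul_nonneg hD0.le (Real.rpow_nonneg (h0 _) _)
  have : e ≤ ε' := min_le_right _ _
  nlinarith

variable {N : ℕ} {I r : Fin N → ℕ}

/-- Tuples of matrices as plain functions, with the sup metric. -/
abbrev TupF (I r : Fin N → ℕ) : Type := (n : Fin N) → Fin (I n) → Fin (r n) → ℝ

theorem tup_dist_le (A B : TupF I r) (c : ℝ) (hc : 0 ≤ c) (h : ∀ n i j, |A n i j - B n i j| ≤ c) :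
    dist A B ≤ c := by
  rw [dist_pi_le_iff hc]; intro n
  rw [dist_pi_le_iff hc]; intro i
  rw [dist_pi_le_iff hc]; intro j
  rw [Real.dist_eq]; exact h n i j

theorem tup_le_dist (A B : TupF I r) (n : Fin N) (i : Fin (I n)) (j : Fin (r n)) :
    |A n i j - B n i j| ≤ dist A B := by
  rw [← Real.dist_eq]
  exact (dist_le_pi_dist (A n i) (B n i) j).trans
    ((dist_le_pi_dist (A n) (B n) i).trans (dist_le_pi_dist A B n))

theorem entry_sq_le_froSq {ι κ : Type*} [Fintype ι] [Fintype κ] (M : Matrix ι κ ℝ) (i : ι) (j : κ) :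
    M i j ^ 2 ≤ froSq M := by
  unfold froSq
  refine (Finset.single_le_sum (f := fun j => M i j ^ 2) (fun j _ => sq_nonneg _)
    (Finset.mem_univ j)).trans ?_
  exact Finset.single_le_sum (f := fun i => ∑ j, M i j ^ 2)
    (fun i _ => Finset.sum_nonneg fun j _ => sq_nonneg _) (Finset.mem_univ i)

theorem coord_cd (n : Fin N) (i : Fin (I n)) (j : Fin (r n)) :
    ContDiff ℝ 1 (fun A : TupF I r => A n i j) :=
  contDiff_pi.1 (contDiff_pi.1 (contDiff_pi.1 contDiff_id n) i) j

theorem Gmat_cd (X : ((n : Fin N) → Fin (I n)) → ℝ) (n : Fin N) (i : Fin (I n))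
    (c : (m : {m : Fin N // m ≠ n}) → Fin (r m.1)) :
    ContDiff ℝ 1 (fun A : TupF I r => Gmat X A n i c) := by
  unfold Gmat
  refine ContDiff.sum fun idx _ => ContDiff.mul contDiff_const ?_
  exact contDiff_prod fun m _ => coord_cd _ _ _

theorem RS_cd (X : ((n : Fin N) → Fin (I n)) → ℝ) (n : Fin N) (i : Fin (I n)) (j : Fin (r n)) :
    ContDiff ℝ 1 (fun A : TupF I r => RS X (fun n => (A n : Matrix (Fin (I n)) (Fin (r n)) ℝ)) n i j) := by
  have hG := Gmat_cd (r := r) X n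
  have hc := coord_cd (I := I) (r := r) n
  have hGGA : ∀ i j, ContDiff ℝ 1 (fun A : TupF I r =>
      ∑ x, (∑ y, Gmat X A n i y * Gmat X A n x y) * A n x j) := by
    intro i j
    refine ContDiff.sum fun x _ => ContDiff.mul (ContDiff.sum fun y _ => ?_) (hc _ _)
    exact (hG _ _).mul (hG _ _)
  have h2 : ContDiff ℝ 1 (fun A : TupF I r => ∑ z, (∑ y, A n i y * A n z y) *
      (∑ x, (∑ y, Gmat X A n z y * Gmat X A n x y) * A n x j)) := by
    refine ContDiff.sum fun x _ => ContDiff.mul (ContDiff.sum fun y _ => ?_) (hGGA _ _)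
    exact (hc _ _).mul (hc _ _)
  have h3 := (hGGA i j).sub h2
  exact h3

theorem fval_cont (X : ((n : Fin N) → Fin (I n)) → ℝ) :
    Continuous (fun A : TupF I r => fval X A) := by
  unfold fval
  refine continuous_finsetSum _ fun c _ => Continuous.pow (continuous_finsetSum _ fun idx _ => ?_) 2
  refine continuous_const.mul (continuous_finsetProd _ fun n _ => ?_)
  exact (coord_cd _ _ _).continuous

theorem Gmat_cont (X : ((n : Fin N) → Fin (I n)) → ℝ) (n : Fin N) :
    Continuous (fun A : TupF I r => Gmat X A n) := by
  refine continuous_matrix fun i c => (Gmat_cd X n i c).continuous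

theorem Gmat_congr (X : ((n : Fin N) → Fin (I n)) → ℝ)
    (A B : (n : Fin N) → Matrix (Fin (I n)) (Fin (r n)) ℝ) (n : Fin N)
    (h : ∀ i, i ≠ n → A i = B i) : Gmat X A n = Gmat X B n := by
  unfold Gmat
  funext j c
  refine Finset.sum_congr rfl fun idx _ => ?_
  congr 1
  exact Finset.prod_congr rfl fun m _ => by rw [h m.1 m.2]

/-- Hybrid tuple with the first `j` blocks updated. -/
def hybN (A B : (n : Fin N) → Matrix (Fin (I n)) (Fin (r n)) ℝ) (j : ℕ) :
    (i : Fin N) → Matrix (Fin (I i)) (Fin (r i)) ℝ :=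
  fun i => if i.val < j then B i else A i

theorem hybN_eq (A B : (n : Fin N) → Matrix (Fin (I n)) (Fin (r n)) ℝ) (n : Fin N) :
    hyb A B n = hybN A B n.val := by
  funext i
  simp only [hyb, hybN, Fin.lt_def]

theorem hybN_Gmat (X : ((n : Fin N) → Fin (I n)) → ℝ)
    (A B : (n : Fin N) → Matrix (Fin (I n)) (Fin (r n)) ℝ) (n : Fin N) :
    Gmat X (hybN A B (n.val + 1)) n = Gmat X (hyb A B n) n := by
  rw [hybN_eq]
  refine Gmat_congr X _ _ n fun i hi => ?_
  have : i.val ≠ n.val := fun h => hi (Fin.ext h)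
  have e : i.val < n.val + 1 ↔ i.val < n.val := by omega
  simp only [hybN, e]

end Final



section Main

variable {N : ℕ} {I r : Fin N → ℕ}

theorem uniform_growth (hr : ∀ n, r n ≤ I n) (X : ((n : Fin N) → Fin (I n)) → ℝ)
    (Abar : TupF I r) (hnd : NonDeg X Abar) :
    ∃ C ρ : ℝ, 0 < C ∧ 0 < ρ ∧ ∀ A' : TupF I r, dist A' Abar < ρ → ∀ n,
      ∀ A B : Matrix (Fin (I n)) (Fin (r n)) ℝ, Aᵀ * A = 1 → Bᵀ * B = 1 →
      (∀ D : Matrix (Fin (I n)) (Fin (r n)) ℝ, Dᵀ * D = 1 →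
        froSq (Dᵀ * Gmat X A' n) ≤ froSq (Bᵀ * Gmat X A' n)) →
      C * (froSq (Bᵀ * Gmat X A' n) - froSq (Aᵀ * Gmat X A' n)) < 1 →
      ∃ B' : Matrix (Fin (I n)) (Fin (r n)) ℝ, B'ᵀ * B' = 1 ∧
        froSq (B'ᵀ * Gmat X A' n) = froSq (Bᵀ * Gmat X A' n) ∧
        froSq (B' - A) ≤ C * (froSq (Bᵀ * Gmat X A' n) - froSq (Aᵀ * Gmat X A' n)) := by
  have hb := fun n => block_growth (Gmat X Abar n) (hr n) (hnd n)
  choose C hC hev using hb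
  have hev2 : ∀ᶠ A' : TupF I r in nhds Abar, ∀ n,
      ∀ A B : Matrix (Fin (I n)) (Fin (r n)) ℝ, Aᵀ * A = 1 → Bᵀ * B = 1 →
      (∀ D : Matrix (Fin (I n)) (Fin (r n)) ℝ, Dᵀ * D = 1 →
        froSq (Dᵀ * Gmat X A' n) ≤ froSq (Bᵀ * Gmat X A' n)) →
      C n * (froSq (Bᵀ * Gmat X A' n) - froSq (Aᵀ * Gmat X A' n)) < 1 →
      ∃ B' : Matrix (Fin (I n)) (Fin (r n)) ℝ, B'ᵀ * B' = 1 ∧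
        froSq (B'ᵀ * Gmat X A' n) = froSq (Bᵀ * Gmat X A' n) ∧
        froSq (B' - A) ≤ C n * (froSq (Bᵀ * Gmat X A' n) - froSq (Aᵀ * Gmat X A' n)) := by
    rw [eventually_all]
    intro n
    exact ((Gmat_cont (r := r) X n).tendsto Abar).eventually (hev n)
  obtain ⟨ρ, hρ, hball⟩ := Metric.eventually_nhds_iff.1 hev2
  have hCs : ∀ n, C n ≤ 1 + ∑ i, C i := fun n => by
    have := Finset.single_le_sum (f := C) (fun i _ => (hC i).le) (Finset.mem_univ n)
    linarith
  refine ⟨1 + ∑ i, C i, ρ, ?_, hρ, ?_⟩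
  · have := Finset.sum_nonneg (s := Finset.univ) (f := C) (fun i _ => (hC i).le)
    linarith
  · intro A' hA' n A B hA hB hmax hlt
    have hd : 0 ≤ froSq (Bᵀ * Gmat X A' n) - froSq (Aᵀ * Gmat X A' n) := sub_nonneg.2 (hmax A hA)
    have hle := mul_le_mul_of_nonneg_right (hCs n) hd
    obtain ⟨B', h1, h2, h3⟩ := hball hA' n A B hA hB hmax (lt_of_le_of_lt hle hlt)
    exact ⟨B', h1, h2, h3.trans hle⟩

theorem hybN_self (A B : (n : Fin N) → Matrix (Fin (I n)) (Fin (r n)) ℝ) (n : Fin N) :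
    hybN A B n.val n = A n := by simp [hybN]

theorem hybN_succ_self (A B : (n : Fin N) → Matrix (Fin (I n)) (Fin (r n)) ℝ) (n : Fin N) :
    hybN A B (n.val + 1) n = B n := by simp [hybN]

theorem hybN_zero (A B : (n : Fin N) → Matrix (Fin (I n)) (Fin (r n)) ℝ) :
    hybN A B 0 = A := by funext i; simp [hybN]

theorem hybN_N (A B : (n : Fin N) → Matrix (Fin (I n)) (Fin (r n)) ℝ) (j : ℕ) (hj : N ≤ j) :
    hybN A B j = B := by
  funext i
  have : i.val < j := lt_of_lt_of_le i.2 hj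
  simp [hybN, this]

theorem hooi_fval_lo (X : ((n : Fin N) → Fin (I n)) → ℝ)
    (A : ℕ → (n : Fin N) → Matrix (Fin (I n)) (Fin (r n)) ℝ) (k : ℕ) (n : Fin N) :
    fval X (hybN (A k) (A (k + 1)) n.val) = froSq ((A k n)ᵀ * Gseq X A k n) := by
  rw [fval_eq X _ n, hybN_self, ← hybN_eq]; rfl

theorem hooi_fval_hi (X : ((n : Fin N) → Fin (I n)) → ℝ)
    (A : ℕ → (n : Fin N) → Matrix (Fin (I n)) (Fin (r n)) ℝ) (k : ℕ) (n : Fin N) :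
    fval X (hybN (A k) (A (k + 1)) (n.val + 1)) = froSq ((A (k + 1) n)ᵀ * Gseq X A k n) := by
  rw [fval_eq X _ n, hybN_succ_self, hybN_Gmat]; rfl

theorem hooi_mono_j (X : ((n : Fin N) → Fin (I n)) → ℝ)
    (A : ℕ → (n : Fin N) → Matrix (Fin (I n)) (Fin (r n)) ℝ) (hA : IsHOOI X A) (k : ℕ) :
    Monotone (fun j => fval X (hybN (A k) (A (k + 1)) j)) := by
  refine monotone_nat_of_le_succ fun j => ?_
  by_cases hj : j < N
  · have h1 := hooi_fval_lo X A k ⟨j, hj⟩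
    have h2 := hooi_fval_hi X A k ⟨j, hj⟩
    simp only at h1 h2
    rw [h1, h2]
    exact hA.2 k ⟨j, hj⟩ _ (hA.1 k _)
  · rw [hybN_N _ _ j (by omega), hybN_N _ _ (j + 1) (by omega)]

theorem hooi_block_gain (X : ((n : Fin N) → Fin (I n)) → ℝ)
    (A : ℕ → (n : Fin N) → Matrix (Fin (I n)) (Fin (r n)) ℝ) (hA : IsHOOI X A) (k : ℕ) (n : Fin N) :
    froSq ((A (k + 1) n)ᵀ * Gseq X A k n) - froSq ((A k n)ᵀ * Gseq X A k n) ≤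
      fval X (A (k + 1)) - fval X (A k) := by
  have hm := hooi_mono_j X A hA k
  have h1 : fval X (hybN (A k) (A (k + 1)) (n.val + 1)) ≤ fval X (hybN (A k) (A (k + 1)) N) :=
    hm (by omega)
  have h2 : fval X (hybN (A k) (A (k + 1)) 0) ≤ fval X (hybN (A k) (A (k + 1)) n.val) :=
    hm (Nat.zero_le _)
  rw [hybN_N _ _ N le_rfl, hooi_fval_hi] at h1
  rw [hybN_zero, hooi_fval_lo] at h2
  linarith

theorem hooi_mono (X : ((n : Fin N) → Fin (I n)) → ℝ)
    (A : ℕ → (n : Fin N) → Matrix (Fin (I n)) (Fin (r n)) ℝ) (hA : IsHOOI X A) :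
    Monotone (fun k => fval X (A k)) := by
  refine monotone_nat_of_le_succ fun k => ?_
  have h2 : fval X (hybN (A k) (A (k + 1)) 0) ≤ fval X (hybN (A k) (A (k + 1)) N) :=
    hooi_mono_j X A hA k (Nat.zero_le _)
  rwa [hybN_N _ _ N le_rfl, hybN_zero] at h2

/-- One greedy step near the limit point. -/
theorem hooi_step (X : ((n : Fin N) → Fin (I n)) → ℝ)
    (A : ℕ → (n : Fin N) → Matrix (Fin (I n)) (Fin (r n)) ℝ) (hA : IsGreedyHOOI X A)
    (Abar : TupF I r) (C ρ : ℝ) (hC : 0 < C) (hρ : 0 < ρ)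
    (hgrow : ∀ A' : TupF I r, dist A' Abar < ρ → ∀ n,
      ∀ A B : Matrix (Fin (I n)) (Fin (r n)) ℝ, Aᵀ * A = 1 → Bᵀ * B = 1 →
      (∀ D : Matrix (Fin (I n)) (Fin (r n)) ℝ, Dᵀ * D = 1 →
        froSq (Dᵀ * Gmat X A' n) ≤ froSq (Bᵀ * Gmat X A' n)) →
      C * (froSq (Bᵀ * Gmat X A' n) - froSq (Aᵀ * Gmat X A' n)) < 1 →
      ∃ B' : Matrix (Fin (I n)) (Fin (r n)) ℝ, B'ᵀ * B' = 1 ∧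
        froSq (B'ᵀ * Gmat X A' n) = froSq (Bᵀ * Gmat X A' n) ∧
        froSq (B' - A) ≤ C * (froSq (Bᵀ * Gmat X A' n) - froSq (Aᵀ * Gmat X A' n)))
    (k : ℕ) (hk : dist (α := TupF I r) (A k) Abar < ρ / 2)
    (hh1 : C * (fval X (A (k + 1)) - fval X (A k)) < 1)
    (hh2 : C * (fval X (A (k + 1)) - fval X (A k)) < (ρ / 2) ^ 2) :
    dist (α := TupF I r) (A (k + 1)) (A k) ^ 2 ≤ C * (fval X (A (k + 1)) - fval X (A k)) ∧
    ∀ j, dist (α := TupF I r) (hybN (A k) (A (k + 1)) j) Abar < ρ := by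
  set d := fval X (A (k + 1)) - fval X (A k) with hd
  have hd0 : 0 ≤ d := sub_nonneg.2 (hooi_mono X A hA.1 (Nat.le_succ k))
  have hCd : 0 ≤ C * d := mul_nonneg hC.le hd0
  have hsq : Real.sqrt (C * d) < ρ / 2 := (Real.sqrt_lt' (by positivity)).2 hh2
  have hent : ∀ n, froSq (A (k + 1) n - A k n) ≤ C * d →
      ∀ i j, |A (k + 1) n i j - A k n i j| ≤ Real.sqrt (C * d) := by
    intro n hn i j
    refine Real.abs_le_sqrt ?_
    exact (entry_sq_le_froSq (A (k + 1) n - A k n) i j).trans hn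
  have hhyb : ∀ j, (∀ n : Fin N, n.val < j → froSq (A (k + 1) n - A k n) ≤ C * d) →
      dist (α := TupF I r) (hybN (A k) (A (k + 1)) j) Abar < ρ := by
    intro j hj
    have h1 : dist (α := TupF I r) (hybN (A k) (A (k + 1)) j) (A k) ≤ Real.sqrt (C * d) := by
      refine tup_dist_le _ _ _ (Real.sqrt_nonneg _) fun n i l => ?_
      by_cases hn : n.val < j
      · have : hybN (A k) (A (k + 1)) j n = A (k + 1) n := by simp [hybN, hn]
        rw [this]; exact hent n (hj n hn) i l
      · have : hybN (A k) (A (k + 1)) j n = A k n := by simp [hybN, hn]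
        rw [this]; simp
    have := dist_triangle (α := TupF I r) (hybN (A k) (A (k + 1)) j) (A k) Abar
    linarith
  have hall : ∀ j, ∀ n : Fin N, n.val < j → froSq (A (k + 1) n - A k n) ≤ C * d := by
    intro j
    induction j with
    | zero => intro n hn; omega
    | succ j ih =>
      intro n hn
      by_cases hnj : n.val < j
      · exact ih n hnj
      have hnj' : n.val = j := by omega
      have hnear := hhyb j ih
      rw [← hnj', ← hybN_eq] at hnear
      have hgain := hooi_block_gain X A hA.1 k n
      have hgain' : C * (froSq ((A (k + 1) n)ᵀ * Gseq X A k n) - froSq ((A k n)ᵀ * Gseq X A k n))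
          ≤ C * d := mul_le_mul_of_nonneg_left hgain hC.le
      obtain ⟨B', hB1, hB2, hB3⟩ := hgrow _ hnear n (A k n) (A (k + 1) n) (hA.1.1 k n)
        (hA.1.1 (k + 1) n) (hA.1.2 k n) (lt_of_le_of_lt hgain' hh1)
      have hfro := hA.2 k n B' hB1 (fun D hD => (hA.1.2 k n D hD).trans (le_of_eq hB2.symm))
      have : froSq (A (k + 1) n - A k n) ≤ froSq (B' - A k n) := by
        unfold fro at hfro
        exact (Real.sqrt_le_sqrt_iff (froSq_nonneg' _)).1 hfro
      exact this.trans (hB3.trans hgain')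
  have hall' : ∀ n : Fin N, froSq (A (k + 1) n - A k n) ≤ C * d := fun n => hall (n.val + 1) n (by omega)
  constructor
  · have h1 : dist (α := TupF I r) (A (k + 1)) (A k) ≤ Real.sqrt (C * d) :=
      tup_dist_le _ _ _ (Real.sqrt_nonneg _) fun n i l => hent n (hall' n) i l
    calc dist (α := TupF I r) (A (k + 1)) (A k) ^ 2 ≤ Real.sqrt (C * d) ^ 2 :=
          pow_le_pow_left₀ dist_nonneg h1 2
      _ = C * d := Real.sq_sqrt hCd
  · intro j
    exact hhyb j (hall j)

theorem RS_hyb_zero (X : ((n : Fin N) → Fin (I n)) → ℝ)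
    (A : ℕ → (n : Fin N) → Matrix (Fin (I n)) (Fin (r n)) ℝ) (hA : IsHOOI X A) (k : ℕ) (n : Fin N) :
    RS X (hybN (A k) (A (k + 1)) (n.val + 1)) n = 0 := by
  unfold RS
  rw [GS_real, hybN_Gmat, hybN_succ_self]
  exact sub_eq_zero.2 (first_order _ _ (hA.1 (k + 1) n) (hA.2 k n))

theorem RS_lip (X : ((n : Fin N) → Fin (I n)) → ℝ) (Abar : TupF I r) :
    ∃ L ρ : ℝ, 0 < L ∧ 0 < ρ ∧ ∀ A B : TupF I r, dist A Abar < ρ → dist B Abar < ρ → ∀ n i j,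
      |RS X A n i j - RS X B n i j| ≤ L * dist A B := by
  have hcd : ContDiff ℝ 1 (fun A : TupF I r => (fun n i j => RS X A n i j : TupF I r)) :=
    contDiff_pi.2 fun n => contDiff_pi.2 fun i => contDiff_pi.2 fun j => RS_cd X n i j
  obtain ⟨K, t, ht, hK⟩ := hcd.contDiffAt.exists_lipschitzOnWith (x := Abar)
  obtain ⟨ρ, hρ, hball⟩ := Metric.mem_nhds_iff.1 ht
  refine ⟨K + 1, ρ, by positivity, hρ, fun A B hAd hBd n i j => ?_⟩
  have h1 := hK.dist_le_mul A (hball hAd) B (hball hBd)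
  have h2 := tup_le_dist (fun n i j => RS X A n i j : TupF I r) (fun n i j => RS X B n i j) n i j
  have h3 : 0 ≤ dist A B := dist_nonneg
  calc |RS X A n i j - RS X B n i j| ≤ K * dist A B := h2.trans h1
    _ ≤ (K + 1) * dist A B := by nlinarith

theorem froSq_cont (Abar : TupF I r) (n : Fin N) :
    Continuous (fun A : TupF I r =>
      fro ((A n : Matrix (Fin (I n)) (Fin (r n)) ℝ) - (Abar n : Matrix (Fin (I n)) (Fin (r n)) ℝ))) := by
  unfold fro froSq
  refine Real.continuous_sqrt.comp (continuous_finsetSum _ fun i _ => continuous_finsetSum _ fun j _ => ?_)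
  exact (((coord_cd n i j).continuous).sub continuous_const).pow 2

/-- If a greedy HOOI sequence has a block-nondegenerate limit
point `Ā`, then `Ā` is a critical point and the whole sequence converges to `Ā`. -/
theorem stmt12' (hr : ∀ n, r n ≤ I n)
    (X : ((n : Fin N) → Fin (I n)) → ℝ)
    (A : ℕ → (n : Fin N) → Matrix (Fin (I n)) (Fin (r n)) ℝ)
    (hA : IsGreedyHOOI X A)
    (Abar : (n : Fin N) → Matrix (Fin (I n)) (Fin (r n)) ℝ)
    (hlim : IsLimitPt A Abar) (hnd : NonDeg X Abar) :
    Critical X Abar ∧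
    ∀ n, Filter.Tendsto (fun k => fro (A k n - Abar n)) Filter.atTop (nhds 0) := by
  obtain ⟨φ, hφ, hφlim⟩ := hlim
  obtain ⟨C, ρ, hC, hρ, hgrow⟩ := uniform_growth hr X Abar hnd
  obtain ⟨L, ρ2, hL, hρ2, hlip⟩ := RS_lip X Abar
  obtain ⟨θ, η, hθ0, hθ1, hη, hkl⟩ := kl_hooi X (fval X Abar)
  let a : ℕ → TupF I r := A
  let abar : TupF I r := Abar
  have hsub : Tendsto (fun k => a (φ k)) atTop (nhds abar) := by
    refine tendsto_pi_nhds.2 fun n => tendsto_pi_nhds.2 fun i => tendsto_pi_nhds.2 fun j => ?_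
    rw [tendsto_iff_dist_tendsto_zero]
    refine squeeze_zero (fun _ => dist_nonneg) (fun k => ?_) (hφlim n)
    rw [Real.dist_eq]
    exact Real.abs_le_sqrt (entry_sq_le_froSq (A (φ k) n - Abar n) i j)
  have hmono := hooi_mono X A hA.1
  have hfsub : Tendsto (fun k => fval X (A (φ k))) atTop (nhds (fval X Abar)) :=
    ((fval_cont X).tendsto abar).comp hsub
  have hflim : Tendsto (fun k => fval X (A k)) atTop (nhds (fval X Abar)) :=
    (tendsto_iff_tendsto_subseq_of_monotone hmono hφ.tendsto_atTop).2 hfsub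
  have hfle : ∀ k, fval X (A k) ≤ fval X Abar := fun k => hmono.ge_of_tendsto hflim k
  set h : ℕ → ℝ := fun k => fval X Abar - fval X (A k) with hh
  have h0 : ∀ k, 0 ≤ h k := fun k => sub_nonneg.2 (hfle k)
  have hanti : Antitone h := fun i j hij => sub_le_sub_left (hmono hij) _
  have hhlim : Tendsto h atTop (nhds 0) := by
    have := hflim.const_sub (fval X Abar)
    rwa [sub_self] at this
  -- local radius
  set ρ0 := min ρ ρ2 with hρ0
  have hρ0pos : 0 < ρ0 := lt_min hρ hρ2
  set ε := min (ρ0 / 2) (min η (min (1 / C) ((ρ0 / 2) ^ 2 / C))) with hε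
  have hεpos : 0 < ε := by positivity
  have hε1 : ε ≤ ρ0 / 2 := min_le_left _ _
  have hε2 : ε ≤ η := (min_le_right _ _).trans (min_le_left _ _)
  have hε3 : ε ≤ 1 / C := (min_le_right _ _).trans ((min_le_right _ _).trans (min_le_left _ _))
  have hε4 : ε ≤ (ρ0 / 2) ^ 2 / C :=
    (min_le_right _ _).trans ((min_le_right _ _).trans (min_le_right _ _))
  have hres : ∀ k, dist (a k) abar < ε → h k < ε →
      dist (a (k + 1)) (a k) ^ 2 ≤ C * (h k - h (k + 1)) ∧
      ∀ n i j, |RS X (A k) n i j| ≤ L * dist (a (k + 1)) (a k) := by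
    intro k hk1 hk2
    have hgain : fval X (A (k + 1)) - fval X (A k) ≤ h k := by
      have := hfle (k + 1); simp only [hh]; linarith
    have hg1 : C * (fval X (A (k + 1)) - fval X (A k)) < 1 := by
      have : fval X (A (k + 1)) - fval X (A k) < 1 / C := by linarith
      rw [lt_div_iff₀ hC] at this; linarith
    have hg2 : C * (fval X (A (k + 1)) - fval X (A k)) < (ρ0 / 2) ^ 2 := by
      have : fval X (A (k + 1)) - fval X (A k) < (ρ0 / 2) ^ 2 / C := by linarith
      rw [lt_div_iff₀ hC] at this; linarith
    obtain ⟨s1, s2⟩ := hooi_step X A hA Abar C ρ0 hC hρ0pos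
      (fun A' hA' => hgrow A' (lt_of_lt_of_le hA' (min_le_left _ _))) k
      (lt_of_lt_of_le hk1 hε1) hg1 hg2
    constructor
    · refine s1.trans (le_of_eq ?_)
      simp only [hh]; ring
    · intro n i j
      have hz := RS_hyb_zero X A hA.1 k n
      have hρ02 : ρ0 ≤ ρ2 := min_le_right _ _
      have hl := hlip (a k) (hybN (A k) (A (k + 1)) (n.val + 1)) (by
        show dist (a k) abar < ρ2
        linarith) (lt_of_lt_of_le (s2 _) hρ02) n i j
      rw [hz] at hl
      have hd : dist (α := TupF I r) (a k) (hybN (A k) (A (k + 1)) (n.val + 1)) ≤ dist (a (k + 1)) (a k) := by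
        refine tup_dist_le _ _ _ dist_nonneg fun n' i' j' => ?_
        by_cases hn : n'.val < n.val + 1
        · have : hybN (A k) (A (k + 1)) (n.val + 1) n' = A (k + 1) n' := by simp only [hybN, hn, if_true]
          rw [this, abs_sub_comm]
          exact tup_le_dist (a (k + 1)) (a k) n' i' j'
        · have : hybN (A k) (A (k + 1)) (n.val + 1) n' = A k n' := by simp only [hybN, hn, if_false]
          rw [this]
          have e : a k n' i' j' - A k n' i' j' = 0 := sub_self _
          rw [e, abs_zero]; exact dist_nonneg
      have e : RS X (a k) n i j - (0 : Matrix (Fin (I n)) (Fin (r n)) ℝ) i j = RS X (A k) n i j :=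
        sub_zero _
      rw [e] at hl
      exact hl.trans (mul_le_mul_of_nonneg_left hd hL.le)
  have hconv : Tendsto a atTop (nhds abar) := by
    refine kl_conv a abar h h0 hanti hhlim ε (C + 2 * L) θ hεpos (by positivity) hθ0 hθ1 ?_ φ hφ hsub
    intro k hk1 hk2
    obtain ⟨s1, s2⟩ := hres k hk1 hk2
    have hd0 : 0 ≤ dist (a (k + 1)) (a k) := dist_nonneg
    have hdh : 0 ≤ h k - h (k + 1) := sub_nonneg.2 (hanti (Nat.le_succ k))
    constructor
    · nlinarith [mul_nonneg hL.le hdh]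
    · have habs : |fval X (A k) - fval X Abar| = h k := by
        rw [abs_sub_comm, abs_of_nonneg (h0 k)]
      have := hkl (A k) (hA.1.1 k) (by rw [habs]; linarith) (L * dist (a (k + 1)) (a k))
        (by positivity) s2
      rw [habs] at this
      nlinarith [mul_nonneg hC.le hd0]
  refine ⟨?_, ?_⟩
  · intro n
    have hz : ∀ i j, RS X Abar n i j = 0 := by
      intro i j
      have t1 : Tendsto (fun k => |RS X (A k) n i j|) atTop (nhds |RS X Abar n i j|) :=
        (((RS_cd X n i j).continuous.tendsto abar).comp hconv).abs
      have t2 : Tendsto (fun k => L * dist (a (k + 1)) (a k)) atTop (nhds 0) := by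
        have := ((hconv.comp (tendsto_add_atTop_nat 1)).dist hconv).const_mul L
        rw [dist_self, mul_zero] at this
        exact this
      have t3 : ∀ᶠ k in atTop, |RS X (A k) n i j| ≤ L * dist (a (k + 1)) (a k) := by
        filter_upwards [(Metric.tendsto_nhds.1 hconv) ε hεpos, hhlim.eventually (gt_mem_nhds hεpos)]
          with k hk1 hk2
        exact (hres k hk1 hk2).2 n i j
      have := le_of_tendsto_of_tendsto t1 t2 t3
      exact abs_nonpos_iff.1 this
    have hz' : RS X Abar n = 0 := by ext i j; exact hz i j
    exact sub_eq_zero.1 hz'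
  · intro n
    have := ((froSq_cont abar n).tendsto abar).comp hconv
    have e : fro ((abar n : Matrix (Fin (I n)) (Fin (r n)) ℝ) - (abar n : Matrix (Fin (I n)) (Fin (r n)) ℝ)) = 0 := by
      rw [sub_self]; simp [fro, froSq]
    rw [e] at this
    exact this

end Main

/-- If a greedy HOOI sequence has a block-nondegenerate limit
point `Ā`, then `Ā` is a critical point and the whole sequence converges to `Ā`. -/
theorem stmt12 {N : ℕ} {I r : Fin N → ℕ} (hr : ∀ n, r n ≤ I n)
    (X : ((n : Fin N) → Fin (I n)) → ℝ)
    (A : ℕ → (n : Fin N) → Matrix (Fin (I n)) (Fin (r n)) ℝ)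
    (hA : IsGreedyHOOI X A)
    (Abar : (n : Fin N) → Matrix (Fin (I n)) (Fin (r n)) ℝ)
    (hfeas : TFeas Abar) (hlim : IsLimitPt A Abar) (hnd : NonDeg X Abar) :
    Critical X Abar ∧
    ∀ n, Filter.Tendsto (fun k => fro (A k n - Abar n)) Filter.atTop (nhds 0) := by
  exact stmt12' hr X A hA Abar hlim hnd
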